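/- Let x ∈ B_n be cyclically weighted with canonical length ℓ(x) ≥ 2. Then every braid in the reduced super summit set RSSS(x) is cyclically weighted. -/

import Mathlib

/-! Basic definitions for the braid group `B_n`, its Garside structure,
and related notions, following Garside/El-Rifai–Morton.
Generators are indexed by `i : Fin (n-1)`, with `σ i` corresponding to the
Artin generator `σ_{i+1}` (1-based) of the paper. -/

/-- The braid relations, as a set of elements of the free group. -/
def braidRels (n : ℕ) : Set (FreeGroup (Fin (n - 1))) :=
  { r | (∃ i j : Fin (n - 1), (i : ℕ) + 1 < (j : ℕ) ∧
          r = .of i * .of j * (.of i)⁻¹ * (.of j)⁻¹) ∨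
        (∃ i j : Fin (n - 1), (i : ℕ) + 1 = (j : ℕ) ∧
          r = (.of i * .of j * .of i) * (.of j * .of i * .of j)⁻¹) }

/-- The braid group on `n` strands. -/
abbrev BraidGroup (n : ℕ) := PresentedGroup (braidRels n)

namespace BraidGroup

variable {n : ℕ}

/-- The Artin generator `σ_{i+1}` (`i` is a 0-based index). -/
def σ (i : Fin (n - 1)) : BraidGroup n := PresentedGroup.of i

/-- `σ'` with a natural-number 0-based index (junk value `1` out of range). -/
def σ' (n : ℕ) (i : ℕ) : BraidGroup n := if h : i < n - 1 then σ ⟨i, h⟩ else 1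

/-- The fundamental braid `Δ = (σ_1⋯σ_{n-1})(σ_1⋯σ_{n-2})⋯(σ_1σ_2)σ_1`. -/
def Δ (n : ℕ) : BraidGroup n :=
  (((List.range (n - 1)).reverse).map
    (fun j => ((List.range (j + 1)).map (σ' n)).prod)).prod

/-- The monoid of positive braids inside `B_n` (the image of `B_n^+`). -/
def positives (n : ℕ) : Submonoid (BraidGroup n) :=
  Submonoid.closure (Set.range (σ (n := n)))

/-- `x` is a positive braid. -/
def IsPositive (x : BraidGroup n) : Prop := x ∈ positives n

/-- The prefix (left-divisibility) order: `x ≼ y` iff `x⁻¹y` is positive. -/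
def LeftDvd (x y : BraidGroup n) : Prop := ∃ p, IsPositive p ∧ x * p = y

/-- The right-divisibility order: `x ≼_R y` iff `y x⁻¹` is positive. -/
def RightDvd (x y : BraidGroup n) : Prop := ∃ p, IsPositive p ∧ p * x = y

/-- Permutation braids: positive left divisors of `Δ`. -/
def IsPermBraid (x : BraidGroup n) : Prop := IsPositive x ∧ LeftDvd x (Δ n)

/-- The involution `τ` of `B_n`, determined by `τ(σ_i) = σ_{n-i}`
(on 0-based indices: `i ↦ (n-2) - i`, i.e. `Fin.rev`). -/
noncomputable def τ (n : ℕ) : BraidGroup n →* BraidGroup n :=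
  Classical.epsilon (fun f => ∀ i : Fin (n - 1), f (σ i) = σ i.rev)

/-- `τ^u` for an integer `u`: equals `τ` for odd `u` and the identity for even `u`
(`τ` is an involution). -/
noncomputable def τpow (u : ℤ) (x : BraidGroup n) : BraidGroup n :=
  if Even u then x else τ n x

/-- The product `a⬝b` of a permutation braid `a` and a positive braid `b` is left
weighted iff `a* ∧ b = e`, i.e. no generator left-divides both `a* = a⁻¹Δ` and `b`. -/
def IsLeftWeighted (a b : BraidGroup n) : Prop :=
  ∀ i : Fin (n - 1), ¬ (LeftDvd (σ i) (a⁻¹ * Δ n) ∧ LeftDvd (σ i) b)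

/-- `Δ^u x_1 ⋯ x_k` is the left weighted form of `x`, where `L = [x_1, …, x_k]`. -/
def IsWeightedForm (u : ℤ) (L : List (BraidGroup n)) (x : BraidGroup n) : Prop :=
  (∀ a ∈ L, IsPermBraid a ∧ a ≠ 1 ∧ a ≠ Δ n) ∧
  L.Chain' IsLeftWeighted ∧
  x = (Δ n) ^ u * L.prod

/-- The left weighted form of a braid (chosen by choice; it exists and is unique). -/
noncomputable def wf (x : BraidGroup n) : ℤ × List (BraidGroup n) :=
  Classical.epsilon (fun p => IsWeightedForm p.1 p.2 x)

/-- The infimum `inf(x)`. -/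
noncomputable def binf (x : BraidGroup n) : ℤ := (wf x).1

/-- The canonical length `ℓ(x)`. -/
noncomputable def blen (x : BraidGroup n) : ℕ := (wf x).2.length

/-- The supremum `sup(x) = inf(x) + ℓ(x)`. -/
noncomputable def bsup (x : BraidGroup n) : ℤ := binf x + blen x

/-- The head `H(x)`: the first factor of the weighted form. -/
noncomputable def bhead (x : BraidGroup n) : BraidGroup n := ((wf x).2.head?).getD 1

/-- The tail `T(x)`: the last factor of the weighted form. -/
noncomputable def btail (x : BraidGroup n) : BraidGroup n := ((wf x).2.getLast?).getD 1

/-- Cycling: `c(x) = τ^u(H(x))⁻¹ · x · τ^u(H(x))`. -/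
noncomputable def cyc (x : BraidGroup n) : BraidGroup n :=
  (τpow (binf x) (bhead x))⁻¹ * x * τpow (binf x) (bhead x)

/-- Decycling: `d(x) = T(x) · x · T(x)⁻¹`. -/
noncomputable def decyc (x : BraidGroup n) : BraidGroup n :=
  btail x * x * (btail x)⁻¹

/-- `x` is cyclically weighted: `x_k ⬝ τ^u(x_1)` is left weighted. -/
noncomputable def IsCW (x : BraidGroup n) : Prop :=
  IsLeftWeighted (btail x) (τpow (binf x) (bhead x))

/-- `x` is weakly cyclically weighted: `H(x·τ^u(H(x))) = H(x)`. -/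
noncomputable def IsWCW (x : BraidGroup n) : Prop :=
  bhead (x * τpow (binf x) (bhead x)) = bhead x

/-- The summit set of `x`: conjugates with maximal infimum. -/
def SS (x : BraidGroup n) : Set (BraidGroup n) :=
  { y | IsConj x y ∧ ∀ z, IsConj x z → binf z ≤ binf y }

/-- The super summit set of `x`: conjugates with maximal infimum and minimal supremum. -/
def SSS (x : BraidGroup n) : Set (BraidGroup n) :=
  { y | y ∈ SS x ∧ ∀ z, IsConj x z → bsup y ≤ bsup z }

/-- The ultra summit set of `x`. -/
def USS (x : BraidGroup n) : Set (BraidGroup n) :=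
  { y ∈ SSS x | ∃ M : ℕ, 0 < M ∧ cyc^[M] y = y }

/-- The reduced super summit set of `x`. -/
def RSSS (x : BraidGroup n) : Set (BraidGroup n) :=
  { y | IsConj x y ∧ (∃ M : ℕ, 0 < M ∧ cyc^[M] y = y) ∧
        (∃ N : ℕ, 0 < N ∧ decyc^[N] y = y) }

/-- The left meet (greatest common left divisor) of two braids. -/
noncomputable def leftMeet (a b : BraidGroup n) : BraidGroup n :=
  Classical.epsilon (fun m => IsPositive m ∧ LeftDvd m a ∧ LeftDvd m b ∧
    ∀ c, IsPositive c → LeftDvd c a → LeftDvd c b → LeftDvd c m)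

/-- `x` is periodic: some positive power of `x` is a power of `Δ²`. -/
def IsPeriodic (x : BraidGroup n) : Prop :=
  ∃ m : ℕ, 0 < m ∧ ∃ k : ℤ, x ^ m = (Δ n) ^ (2 * k)

/-- The free generator `x_{i+1}` of `π₁` of the `n`-punctured disk (0-based index;
junk value `1` out of range). -/
def freeGen (n : ℕ) (i : ℕ) : FreeGroup (Fin n) := if h : i < n then .of ⟨i, h⟩ else 1

/-- The Artin action of `B_n` on the free group `F_n`:
`σ_i` sends `x_i ↦ x_i x_{i+1} x_i⁻¹`, `x_{i+1} ↦ x_i`, fixing the other generators. -/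
noncomputable def artin (n : ℕ) : BraidGroup n →* Monoid.End (FreeGroup (Fin n)) :=
  Classical.epsilon (fun f => ∀ i : Fin (n - 1),
    f (σ i) = FreeGroup.lift (fun j : Fin n =>
      if (j : ℕ) = (i : ℕ) then freeGen n i * freeGen n (i + 1) * (freeGen n i)⁻¹
      else if (j : ℕ) = (i : ℕ) + 1 then freeGen n i
      else FreeGroup.of j))

/-- The element of `π₁` represented by the round curve enclosing punctures
`I.1 + 1, …, I.2` (1-based): the product `x_{I.1+1} ⋯ x_{I.2}`. -/
def curveWord (n : ℕ) (I : ℕ × ℕ) : FreeGroup (Fin n) :=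
  ((List.range (I.2 - I.1)).map (fun t => freeGen n (I.1 + t))).prod

/-- An essential round curve: it encloses at least `2` and at most `n-1` punctures. -/
def EssentialCurve (n : ℕ) (I : ℕ × ℕ) : Prop :=
  I.1 + 2 ≤ I.2 ∧ I.2 ≤ n ∧ I.2 - I.1 ≤ n - 1

/-- Two round curves are disjoint (as curves): the intervals are disjoint or nested. -/
def CurvesCompatible (I J : ℕ × ℕ) : Prop :=
  I.2 ≤ J.1 ∨ J.2 ≤ I.1 ∨ (I.1 ≤ J.1 ∧ J.2 ≤ I.2) ∨ (J.1 ≤ I.1 ∧ I.2 ≤ J.2)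

/-- `x` is reducible: some conjugate of `x` preserves, up to conjugacy in `π₁`
(i.e. up to isotopy) and orientation, a nonempty system of disjoint essential
round curves. -/
noncomputable def IsReducible (x : BraidGroup n) : Prop :=
  ∃ y, IsConj x y ∧ ∃ F : Finset (ℕ × ℕ), F.Nonempty ∧
    (∀ I ∈ F, EssentialCurve n I) ∧
    (∀ I ∈ F, ∀ J ∈ F, I ≠ J → CurvesCompatible I J) ∧
    (∀ I ∈ F, ∃ J ∈ F, ∃ g : FreeGroup (Fin n),
      artin n y (curveWord n I) = g * curveWord n J * g⁻¹ ∨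
      artin n y (curveWord n I) = g * (curveWord n J)⁻¹ * g⁻¹)

/-- `x` is pseudo-Anosov: neither periodic nor reducible (Nielsen–Thurston). -/
noncomputable def IsPseudoAnosov (x : BraidGroup n) : Prop :=
  ¬ IsPeriodic x ∧ ¬ IsReducible x

/-- `σ_i` (1-based index `i`) left-divides the positive braid `w`, i.e. `i` is
 a descent of `w`. -/
def HasDescent (n : ℕ) (i : ℕ) (w : BraidGroup n) : Prop := LeftDvd (σ' n (i - 1)) w

/-- `D(n,k,i)`: the probability that a product of `k` independent uniformly random
permutation braids begins with the descent `i` (1-based), computed by counting. -/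
noncomputable def descentProb (n k : ℕ) (i : ℕ) : ℝ :=
  ({ f : Fin k → BraidGroup n | (∀ j, IsPermBraid (f j)) ∧
      HasDescent n i (List.ofFn f).prod }.ncard : ℝ) / (n.factorial ^ k : ℝ)

/-- `D(n,k)`: the expected number of descents of a product of `k` random
permutation braids. -/
noncomputable def descentExp (n k : ℕ) : ℝ :=
  ∑ i ∈ Finset.Icc 1 (n - 1), descentProb n k i

/-- `d(n,k) = D(n,k) - D(n,k-1)`: the expected number of descents contributed by
the `k`-th factor. -/
noncomputable def descentInc (n k : ℕ) : ℝ := descentExp n k - descentExp n (k - 1)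


end BraidGroup

/-!
In the prefix order `B_n` is a meet-semilattice, on which `X a = y a Δ ^ (-inf y)` and `D a = a Δ`
are commuting automorphisms, and iterating `F = X ⊓ D` from `1` produces the conjugators of the
iterated cycling of `y`. If `y` is periodic under cycling, then this orbit has a constant average
speed, measured by the exponent sum. Monotonicity of `F` lets us compare orbits: the lower of two
comparable orbits is not the faster one. Applied to a conjugate of `y`, whose orbit can be
translated below that of `y`, this shows that no conjugate has a larger infimum, and the same for
`y⁻¹` settles the supremum; so all of `RSSS x` has the infimum and canonical length of `x`.

For `ℓ = ℓ(y) ≥ 2`, being cyclically weighted amounts to `F^ℓ 1 = X 1`. In general only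
`X 1 ≤ F^ℓ 1`. The orbit of the cyclically weighted `x`, translated above that of `y`, moves at the
speed of `X`, so a strict inequality would make the orbit of `y` too fast.
-/

/-- The defining relations of the simply laced Artin monoid of a graph: adjacent generators satisfy
the braid relation and all other pairs commute. -/
inductive ArtinRel {V : Type*} (G : SimpleGraph V) : FreeMonoid V → FreeMonoid V → Prop
  | comm {i j : V} (h : ¬G.Adj i j) :
      ArtinRel G (FreeMonoid.of i * FreeMonoid.of j) (FreeMonoid.of j * FreeMonoid.of i)
  | braid {i j : V} (h : G.Adj i j) :
      ArtinRel G (FreeMonoid.of i * FreeMonoid.of j * FreeMonoid.of i)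
        (FreeMonoid.of j * FreeMonoid.of i * FreeMonoid.of j)

/-- The simply laced Artin monoid of a graph; for a path it is the monoid of positive braids. -/
abbrev ArtinMonoid {V : Type*} (G : SimpleGraph V) := PresentedMonoid (ArtinRel G)

namespace ArtinMonoid

variable {V : Type*} {G : SimpleGraph V} {i j k : V}

/-- The standard generators of the Artin monoid. -/
def gen (G : SimpleGraph V) (i : V) : ArtinMonoid G := PresentedMonoid.of (ArtinRel G) i

theorem gen_comm (h : ¬G.Adj i j) : gen G i * gen G j = gen G j * gen G i :=
  PresentedMonoid.mk_eq_mk_of_rel (ArtinRel.comm h)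

theorem gen_braid (h : G.Adj i j) :
    gen G i * gen G j * gen G i = gen G j * gen G i * gen G j :=
  PresentedMonoid.mk_eq_mk_of_rel (ArtinRel.braid h)

theorem gen_left_comm (h : ¬G.Adj i j) (x : ArtinMonoid G) :
    gen G i * (gen G j * x) = gen G j * (gen G i * x) := by
  rw [← mul_assoc, gen_comm h, mul_assoc]

theorem gen_left_braid (h : G.Adj i j) (x : ArtinMonoid G) :
    gen G i * (gen G j * (gen G i * x)) = gen G j * (gen G i * (gen G j * x)) := by
  simpa only [mul_assoc] using congrArg (· * x) (gen_braid h)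

@[elab_as_elim]
theorem gen_induction {p : ArtinMonoid G → Prop} (one : p 1)
    (gen_mul : ∀ i x, p x → p (gen G i * x)) (x : ArtinMonoid G) : p x := by
  obtain ⟨w, rfl⟩ := PresentedMonoid.surjective_mk x
  induction w using FreeMonoid.inductionOn' with
  | one => exact one
  | of_mul i w ih => exact gen_mul i _ ih

/-- The word length of an element, well defined because the relations are homogeneous. -/
def length (x : ArtinMonoid G) : ℕ :=
  (PresentedMonoid.lift (fun _ ↦ Multiplicative.ofAdd 1) (by rintro _ _ (h | h) <;> rfl) :
    ArtinMonoid G →* Multiplicative ℕ) x |>.toAdd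

theorem length_mul (x y : ArtinMonoid G) : length (x * y) = length x + length y := by
  simp only [length, map_mul, toAdd_mul]

theorem length_gen_mul (i : V) (x : ArtinMonoid G) : length (gen G i * x) = length x + 1 := by
  rw [length_mul, add_comm]
  rfl

section Cofactor

open scoped Classical in
/-- The complement of `gen i` in the least common multiple of `gen i` and `gen j`. -/
noncomputable def cofactor (G : SimpleGraph V) (i j : V) : ArtinMonoid G :=
  if i = j then 1 else if G.Adj i j then gen G j * gen G i else gen G j

theorem cofactor_self (i : V) : cofactor G i i = 1 := if_pos rfl

theorem cofactor_of_adj (h : G.Adj i j) : cofactor G i j = gen G j * gen G i := by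
  rw [cofactor, if_neg h.ne, if_pos h]

theorem cofactor_of_not_adj (hne : i ≠ j) (h : ¬G.Adj i j) : cofactor G i j = gen G j := by
  rw [cofactor, if_neg hne, if_neg h]

theorem gen_left_comm_cofactor (hi : ¬G.Adj k i) (hj : ¬G.Adj k j) (x : ArtinMonoid G) :
    gen G k * (cofactor G i j * x) = cofactor G i j * (gen G k * x) := by
  rcases eq_or_ne i j with rfl | hne
  · simp only [cofactor_self, one_mul]
  by_cases h : G.Adj i j
  · simp only [cofactor_of_adj h, mul_assoc, gen_left_comm hi, gen_left_comm hj]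
  · simp only [cofactor_of_not_adj hne h, gen_left_comm hj]

theorem gen_mul_cofactor (i j : V) :
    gen G i * cofactor G i j = gen G j * cofactor G j i := by
  rcases eq_or_ne i j with rfl | hne
  · rfl
  by_cases h : G.Adj i j
  · rw [cofactor_of_adj h, cofactor_of_adj h.symm, ← mul_assoc, gen_braid h, mul_assoc]
  · rw [cofactor_of_not_adj hne h, cofactor_of_not_adj hne.symm (mt SimpleGraph.Adj.symm h),
      gen_comm h]

/-- `gen i * X` and `gen j * Y` are the same right multiple of the least common multiple of `gen i`
and `gen j`, expressed in terms of the quotients `X` and `Y`. -/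
def FactorsThroughLcm (i j : V) (X Y : ArtinMonoid G) : Prop :=
  ∃ Z, X = cofactor G i j * Z ∧ Y = cofactor G j i * Z

namespace FactorsThroughLcm

variable {X Y : ArtinMonoid G}

theorem symm (h : FactorsThroughLcm i j X Y) : FactorsThroughLcm j i Y X :=
  h.imp fun _ ↦ And.symm

theorem refl (i : V) (X : ArtinMonoid G) : FactorsThroughLcm i i X X :=
  ⟨X, by simp only [cofactor_self, one_mul, and_self]⟩

theorem mul_right (h : FactorsThroughLcm i j X Y) (W : ArtinMonoid G) :
    FactorsThroughLcm i j (X * W) (Y * W) := by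
  obtain ⟨Z, rfl, rfl⟩ := h
  exact ⟨Z * W, mul_assoc _ _ _, mul_assoc _ _ _⟩

theorem eq (h : FactorsThroughLcm i i X Y) : X = Y := by
  obtain ⟨Z, rfl, rfl⟩ := h
  rfl

theorem of_adj (h : G.Adj i j) :
    FactorsThroughLcm i j X Y ↔
      ∃ Z, X = gen G j * (gen G i * Z) ∧ Y = gen G i * (gen G j * Z) := by
  simp only [FactorsThroughLcm, cofactor_of_adj h, cofactor_of_adj h.symm, mul_assoc]

theorem of_not_adj (hne : i ≠ j) (h : ¬G.Adj i j) :
    FactorsThroughLcm i j X Y ↔ ∃ Z, X = gen G j * Z ∧ Y = gen G i * Z := by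
  simp only [FactorsThroughLcm, cofactor_of_not_adj hne h,
    cofactor_of_not_adj hne.symm (mt SimpleGraph.Adj.symm h)]

end FactorsThroughLcm

/-- Garside's lemma for cofactors of length less than `N`. -/
def LcmPropertyBelow (G : SimpleGraph V) (N : ℕ) : Prop :=
  ∀ (i j : V) (X Y : ArtinMonoid G), length X < N → gen G i * X = gen G j * Y →
    FactorsThroughLcm i j X Y

namespace LcmPropertyBelow

open FactorsThroughLcm

variable {N : ℕ}

theorem mono {M : ℕ} (K : LcmPropertyBelow G N) (h : M ≤ N) : LcmPropertyBelow G M :=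
  fun i j X Y hX ↦ K i j X Y (hX.trans_le h)

theorem gen_cancel (K : LcmPropertyBelow G N) {X Y : ArtinMonoid G} (hX : length X < N)
    (h : gen G i * X = gen G i * Y) : X = Y :=
  (K i i X Y hX h).eq

theorem trans_adj_comm {A B : ArtinMonoid G} (hik : G.Adj i k) (hkj : ¬G.Adj k j) (hne : k ≠ j)
    (hW : gen G i * (gen G k * A) = gen G j * B)
    (K : LcmPropertyBelow G (length (gen G j * B))) :
    FactorsThroughLcm i j (gen G k * (gen G i * A)) (gen G k * B) := by
  rw [← hW] at K
  simp only [length_gen_mul] at K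
  have hij := K _ _ _ _ (by rw [length_gen_mul]; omega) hW
  rcases eq_or_ne i j with rfl | hne_ij
  · exact absurd hik.symm hkj
  by_cases h : G.Adj i j
  · obtain ⟨Z, hA, rfl⟩ := (of_adj h).1 hij
    obtain ⟨Z₁, rfl, hZ⟩ := (of_not_adj hne hkj).1 (K _ _ _ _ (by omega) hA)
    have hlen := congrArg length hZ
    simp only [length_gen_mul] at hlen K
    obtain ⟨Z₂, rfl, rfl⟩ := (of_adj hik).1 (K _ _ _ _ (by omega) hZ)
    refine (of_adj h).2 ⟨gen G k * (gen G i * (gen G j * Z₂)), ?_, ?_⟩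
    · rw [gen_left_braid h, gen_left_comm hkj, ← gen_left_comm hkj Z₂, gen_left_braid hik.symm]
    · rw [← gen_left_comm hkj, gen_left_braid hik.symm, gen_left_braid h, gen_left_comm hkj]
  · obtain ⟨Z, hA, rfl⟩ := (of_not_adj hne_ij h).1 hij
    obtain ⟨Z₁, rfl, rfl⟩ := (of_not_adj hne hkj).1 (K _ _ _ _ (by omega) hA)
    refine (of_not_adj hne_ij h).2 ⟨gen G k * (gen G i * Z₁), ?_, ?_⟩
    · rw [gen_left_comm h, gen_left_comm hkj]
    · rw [gen_left_braid hik.symm]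

theorem trans_adj_adj {A B : ArtinMonoid G} (hik : G.Adj i k) (hkj : G.Adj k j)
    (hij : ¬G.Adj i j) (hW : gen G i * (gen G k * A) = gen G j * (gen G k * B))
    (K : LcmPropertyBelow G (length (gen G j * (gen G k * B)))) :
    FactorsThroughLcm i j (gen G k * (gen G i * A)) (gen G k * (gen G j * B)) := by
  have hlen := congrArg length hW
  simp only [length_gen_mul] at K hlen
  have h := K _ _ _ _ (by rw [length_gen_mul]; omega) hW
  rcases eq_or_ne i j with rfl | hne
  · rw [K.gen_cancel (by omega) h.eq]
    exact refl i _
  obtain ⟨Z, hA, hB⟩ := (of_not_adj hne hij).1 h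
  obtain ⟨Z₁, rfl, hZ₁⟩ := (of_adj hkj).1 (K _ _ _ _ (by omega) hA)
  obtain ⟨Z₂, rfl, hZ₂⟩ := (of_adj hik.symm).1 (K _ _ _ _ (by omega) hB)
  simp only [length_gen_mul] at K hlen
  have hZ : gen G j * Z₁ = gen G i * Z₂ :=
    K.gen_cancel (by rw [length_gen_mul]; omega) (hZ₁.symm.trans hZ₂)
  obtain ⟨Z₃, rfl, rfl⟩ :=
    (of_not_adj hne.symm (mt SimpleGraph.Adj.symm hij)).1 (K _ _ _ _ (by omega) hZ)
  refine (of_not_adj hne hij).2 ⟨gen G k * (gen G j * (gen G i * (gen G k * Z₃))), ?_, ?_⟩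
  · rw [gen_left_comm hij, gen_left_braid hik, gen_left_braid hkj]
  · rw [← gen_left_comm hij, ← gen_left_braid hkj, ← gen_left_braid hik, gen_left_comm hij]

theorem trans (hG : G.CliqueFree 3) {X W Y : ArtinMonoid G} (K : LcmPropertyBelow G (length W))
    (h₁ : FactorsThroughLcm i k X W) (h₂ : FactorsThroughLcm k j W Y) :
    FactorsThroughLcm i j X Y := by
  classical
  rcases eq_or_ne i k with rfl | hne₁
  · rwa [h₁.eq]
  rcases eq_or_ne k j with rfl | hne₂
  · rwa [← h₂.eq]
  by_cases hik : G.Adj i k <;> by_cases hkj : G.Adj k j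
  · obtain ⟨A, rfl, hA⟩ := (of_adj hik).1 h₁
    obtain ⟨B, rfl, rfl⟩ := (of_adj hkj).1 h₂
    have hij : ¬G.Adj i j := fun hij ↦
      hG ({i, k, j} : Finset V) (SimpleGraph.is3Clique_triple_iff.2 ⟨hik, hij, hkj⟩)
    exact K.trans_adj_adj hik hkj hij hA.symm
  · obtain ⟨A, rfl, hA⟩ := (of_adj hik).1 h₁
    obtain ⟨B, rfl, rfl⟩ := (of_not_adj hne₂ hkj).1 h₂
    exact K.trans_adj_comm hik hkj hne₂ hA.symm
  · obtain ⟨A, rfl, rfl⟩ := (of_not_adj hne₁ hik).1 h₁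
    obtain ⟨B, hB, rfl⟩ := (of_adj hkj).1 h₂
    exact (K.trans_adj_comm hkj.symm (mt SimpleGraph.Adj.symm hik) hne₁.symm hB.symm).symm
  · obtain ⟨A, rfl, rfl⟩ := (of_not_adj hne₁ hik).1 h₁
    obtain ⟨B, hB, rfl⟩ := (of_not_adj hne₂ hkj).1 h₂
    obtain ⟨Z, rfl, rfl⟩ := K _ _ _ _ (by rw [length_gen_mul]; omega) hB
    exact ⟨gen G k * Z, gen_left_comm_cofactor (mt SimpleGraph.Adj.symm hik) hkj Z,
      gen_left_comm_cofactor hkj (mt SimpleGraph.Adj.symm hik) Z⟩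

end LcmPropertyBelow

theorem length_mk (u : FreeMonoid V) : length (PresentedMonoid.mk (ArtinRel G) u) = u.length := by
  induction u using FreeMonoid.inductionOn' with
  | one => rfl
  | of_mul i u ih =>
    rw [map_mul, FreeMonoid.length_mul, FreeMonoid.length_of, ← ih, add_comm]
    exact length_gen_mul i _

theorem length_eq_of_conGen_rel {u v : FreeMonoid V} (h : ConGen.Rel (ArtinRel G) u v) :
    u.length = v.length := by
  rw [← length_mk (G := G), ← length_mk (G := G), PresentedMonoid.mk_eq_mk_iff.2 h]

theorem of_mul_inj {x y : FreeMonoid V} (h : FreeMonoid.of i * x = FreeMonoid.of j * y) :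
    i = j ∧ x = y :=
  List.cons.inj h

theorem factorsThroughLcm_of_rel {u v x y : FreeMonoid V} (h : ArtinRel G u v)
    (hu : u = FreeMonoid.of i * x) (hv : v = FreeMonoid.of j * y) :
    FactorsThroughLcm i j (PresentedMonoid.mk (ArtinRel G) x)
      (PresentedMonoid.mk (ArtinRel G) y) := by
  cases h with
  | @comm i' j' h =>
    obtain ⟨rfl, rfl⟩ := of_mul_inj hu
    obtain ⟨rfl, rfl⟩ := of_mul_inj hv
    rcases eq_or_ne i' j' with rfl | hne
    · exact .refl i' _
    · exact (FactorsThroughLcm.of_not_adj hne h).2 ⟨1, (mul_one _).symm, (mul_one _).symm⟩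
  | @braid i' j' h =>
    rw [mul_assoc] at hu hv
    obtain ⟨rfl, rfl⟩ := of_mul_inj hu
    obtain ⟨rfl, rfl⟩ := of_mul_inj hv
    exact (FactorsThroughLcm.of_adj h).2 ⟨1, by rw [mul_one]; rfl, by rw [mul_one]; rfl⟩

theorem factorsThroughLcm_of_conGen_rel (hG : G.CliqueFree 3) {N : ℕ}
    (K : LcmPropertyBelow G N) {u v : FreeMonoid V} (h : ConGen.Rel (ArtinRel G) u v) :
    u.length ≤ N + 1 → ∀ (i j : V) (x y : FreeMonoid V),
      u = FreeMonoid.of i * x → v = FreeMonoid.of j * y →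
      FactorsThroughLcm i j (PresentedMonoid.mk (ArtinRel G) x)
        (PresentedMonoid.mk (ArtinRel G) y) := by
  induction h with
  | of u v h => exact fun _ i j x y hx hy ↦ factorsThroughLcm_of_rel h hx hy
  | refl u =>
    rintro - i j x y rfl h
    obtain ⟨rfl, rfl⟩ := of_mul_inj h
    exact .refl i _
  | symm h ih =>
    intro hu i j x y hx hy
    exact (ih (length_eq_of_conGen_rel h ▸ hu) j i y x hy hx).symm
  | @trans u v w h₁ h₂ ih₁ ih₂ =>
    intro hu i j x y hx hy
    have hv := length_eq_of_conGen_rel h₁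
    cases v using FreeMonoid.casesOn with
    | one => simp [hx] at hv
    | of_mul k z =>
      have hz : length (PresentedMonoid.mk (ArtinRel G) z) ≤ N := by
        rw [FreeMonoid.length_mul, FreeMonoid.length_of] at hv
        rw [length_mk]
        omega
      exact (K.mono hz).trans hG (ih₁ hu i k x z hx rfl) (ih₂ (hv ▸ hu) k j z y rfl hy)
  | @mul u u' w w' h₁ h₂ ih₁ ih₂ =>
    intro hu i j x y hx hy
    have hlen := length_eq_of_conGen_rel h₁
    rw [FreeMonoid.length_mul] at hu
    cases u using FreeMonoid.casesOn with
    | one =>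
      obtain rfl : u' = 1 := FreeMonoid.length_eq_zero.1 hlen.symm
      rw [one_mul] at hx hy
      exact ih₂ (by omega) i j x y hx hy
    | of_mul i' a =>
      cases u' using FreeMonoid.casesOn with
      | one => simp at hlen
      | of_mul j' b =>
        rw [mul_assoc] at hx hy
        obtain ⟨rfl, rfl⟩ := of_mul_inj hx
        obtain ⟨rfl, rfl⟩ := of_mul_inj hy
        rw [map_mul, map_mul, PresentedMonoid.mk_eq_mk_iff.2 h₂]
        exact (ih₁ (by omega) i' j' a b rfl rfl).mul_right _

theorem lcmPropertyBelow (hG : G.CliqueFree 3) (N : ℕ) : LcmPropertyBelow G N := by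
  induction N with
  | zero => exact fun _ _ _ _ h ↦ absurd h (Nat.not_lt_zero _)
  | succ N ih =>
    intro i j X Y hX h
    obtain ⟨x, rfl⟩ := PresentedMonoid.surjective_mk X
    obtain ⟨y, rfl⟩ := PresentedMonoid.surjective_mk Y
    have hrel : ConGen.Rel (ArtinRel G) (FreeMonoid.of i * x) (FreeMonoid.of j * y) :=
      PresentedMonoid.mk_eq_mk_iff.1 (by rw [map_mul, map_mul]; exact h)
    rw [length_mk] at hX
    refine factorsThroughLcm_of_conGen_rel hG ih hrel ?_ i j x y rfl rfl
    rw [FreeMonoid.length_mul, FreeMonoid.length_of]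
    omega

theorem factorsThroughLcm (hG : G.CliqueFree 3) {X Y : ArtinMonoid G}
    (h : gen G i * X = gen G j * Y) : FactorsThroughLcm i j X Y :=
  lcmPropertyBelow hG (length X + 1) i j X Y (Nat.lt_succ_self _) h

theorem isLeftCancelMul (hG : G.CliqueFree 3) : IsLeftCancelMul (ArtinMonoid G) where
  mul_left_cancel := by
    intro a
    induction a using gen_induction with
    | one => exact fun x y h ↦ by simpa only [one_mul] using h
    | gen_mul i a ih =>
      intro x y h
      simp only [mul_assoc] at h
      exact ih (factorsThroughLcm hG h).eq

end Cofactor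

end ArtinMonoid

/-- A sequence whose first `M` terms satisfy the braid relations. -/
structure IsBraidSeq {N : Type*} [Monoid N] (s : ℕ → N) (M : ℕ) : Prop where
  comm : ∀ i j, i + 1 < j → j < M → Commute (s i) (s j)
  braid : ∀ i, i + 1 < M → s i * s (i + 1) * s i = s (i + 1) * s i * s (i + 1)

/-- The ascending product `s 0 * ⋯ * s (k - 1)`. -/
def ascendingProd {N : Type*} [Monoid N] (s : ℕ → N) (k : ℕ) : N :=
  ((List.range k).map s).prod

/-- Garside's half twist on the terms `s 0, …, s (k - 1)`: the product of the ascending products of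
lengths `k, …, 1`. -/
def halfTwist {N : Type*} [Monoid N] (s : ℕ → N) (k : ℕ) : N :=
  ((List.range k).reverse.map fun j ↦ ascendingProd s (j + 1)).prod

section HalfTwist

variable {N : Type*} [Monoid N] (s : ℕ → N)

theorem ascendingProd_zero : ascendingProd s 0 = 1 := rfl

theorem ascendingProd_succ (k : ℕ) : ascendingProd s (k + 1) = ascendingProd s k * s k := by
  simp [ascendingProd, List.range_succ]

theorem ascendingProd_one : ascendingProd s 1 = s 0 := by
  rw [ascendingProd_succ, ascendingProd_zero, one_mul]

theorem ascendingProd_succ_eq_mul (k : ℕ) : ∃ r, ascendingProd s (k + 1) = s 0 * r :=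
  ⟨_, by rw [ascendingProd, List.range_succ_eq_map, List.map_cons, List.prod_cons]⟩

theorem halfTwist_zero : halfTwist s 0 = 1 := rfl

theorem halfTwist_succ (k : ℕ) :
    halfTwist s (k + 1) = ascendingProd s (k + 1) * halfTwist s k := by
  simp [halfTwist, List.range_succ]

theorem map_halfTwist {P : Type*} [Monoid P] (f : N →* P) (k : ℕ) :
    f (halfTwist s k) = halfTwist (f ∘ s) k := by
  simp only [halfTwist, ascendingProd, map_list_prod, List.map_map, Function.comp_def]

end HalfTwist

namespace IsBraidSeq

variable {N : Type*} [Monoid N] {s : ℕ → N} {M i j k : ℕ}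

theorem commute_ascendingProd (h : IsBraidSeq s M) (hj : j < M) (hk : k < j) :
    Commute (s j) (ascendingProd s k) := by
  induction k with
  | zero => exact Commute.one_right _
  | succ k ih =>
    rw [ascendingProd_succ]
    exact (ih (by omega)).mul_right (h.comm k j hk hj).symm

theorem commute_halfTwist (h : IsBraidSeq s M) (hj : j < M) (hk : k < j) :
    Commute (s j) (halfTwist s k) := by
  induction k with
  | zero => exact Commute.one_right _
  | succ k ih =>
    rw [halfTwist_succ]
    exact (h.commute_ascendingProd hj hk).mul_right (ih (by omega))

theorem semiconjBy_ascendingProd (h : IsBraidSeq s M) (hij : i + 1 < j) (hj : j ≤ M) :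
    SemiconjBy (ascendingProd s j) (s i) (s (i + 1)) := by
  induction j, hij using Nat.le_induction with
  | base =>
    have hcomm := h.commute_ascendingProd (show i + 1 < M by omega) (Nat.lt_succ_self i)
    rw [SemiconjBy, ascendingProd_succ, ascendingProd_succ]
    calc ascendingProd s i * s i * s (i + 1) * s i
        = ascendingProd s i * (s i * s (i + 1) * s i) := by simp only [mul_assoc]
      _ = ascendingProd s i * s (i + 1) * (s i * s (i + 1)) := by
        rw [h.braid i (by omega)]; simp only [mul_assoc]
      _ = s (i + 1) * (ascendingProd s i * s i * s (i + 1)) := by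
        rw [← hcomm.eq]; simp only [mul_assoc]
  | succ j hij ih =>
    rw [ascendingProd_succ]
    exact (ih (by omega)).mul_left (h.comm i j (by omega) (by omega)).symm

theorem semiconjBy_ascendingProd_mul_ascendingProd (h : IsBraidSeq s M) (hk : k < M) :
    SemiconjBy (ascendingProd s (k + 1) * ascendingProd s k) (s k) (s 0) := by
  induction k with
  | zero =>
    rw [ascendingProd_one, ascendingProd_zero, mul_one]
    exact Commute.refl _
  | succ k ih =>
    have hcomm := h.commute_ascendingProd hk (Nat.lt_succ_self k)
    have hsplit : ascendingProd s (k + 2) * ascendingProd s (k + 1) =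
        ascendingProd s (k + 1) * ascendingProd s k * (s (k + 1) * s k) := by
      rw [ascendingProd_succ s (k + 1), mul_assoc, ascendingProd_succ s k, ← mul_assoc (s (k + 1)),
        hcomm.eq]
      simp only [mul_assoc]
    rw [hsplit]
    refine (ih (by omega)).mul_left ?_
    rw [SemiconjBy, ← h.braid k hk, mul_assoc]

theorem semiconjBy_halfTwist (h : IsBraidSeq s M) (hk : k ≤ M) (hi : i < k) :
    SemiconjBy (halfTwist s k) (s (k - 1 - i)) (s i) := by
  induction k generalizing i with
  | zero => omega
  | succ k ih =>
    rw [halfTwist_succ]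
    rcases i with _ | i
    · rcases k with _ | k
      · rw [ascendingProd_one, halfTwist_zero, mul_one]
        exact Commute.refl _
      · rw [halfTwist_succ, ← mul_assoc]
        exact (h.semiconjBy_ascendingProd_mul_ascendingProd hk).mul_left
          (h.commute_halfTwist hk (Nat.lt_succ_self k)).symm
    · rw [show k + 1 - 1 - (i + 1) = k - 1 - i by omega]
      exact (h.semiconjBy_ascendingProd (by omega) hk).mul_left (ih (by omega) (by omega))

theorem halfTwist_eq_mul (h : IsBraidSeq s M) (hk : k ≤ M) (hi : i < k) :
    ∃ r, halfTwist s k = s i * r := by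
  induction k generalizing i with
  | zero => omega
  | succ k ih =>
    rw [halfTwist_succ]
    rcases i with _ | i
    · obtain ⟨r, hr⟩ := ascendingProd_succ_eq_mul s k
      exact ⟨r * halfTwist s k, by rw [hr, mul_assoc]⟩
    · obtain ⟨r, hr⟩ := ih (by omega) (Nat.lt_of_succ_lt_succ hi)
      exact ⟨ascendingProd s (k + 1) * r, by
        rw [hr, ← mul_assoc, (h.semiconjBy_ascendingProd (by omega) hk).eq, mul_assoc]⟩

end IsBraidSeq

section GroupOfFractions

/-- Localization at a central submonoid, where the Ore condition is trivial. -/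
abbrev oreSetOfLeCenter {N : Type*} [Monoid N] {S : Submonoid N} (hS : S ≤ Submonoid.center N) :
    OreLocalization.OreSet S where
  ore_right_cancel r₁ r₂ s h := ⟨s, by
    rwa [Submonoid.mem_center_iff.1 (hS s.2), Submonoid.mem_center_iff.1 (hS s.2)] at h⟩
  oreNum r _ := r
  oreDenom _ s := s
  ore_eq r s := (Submonoid.mem_center_iff.1 (hS s.2) r).symm

theorem exists_injective_hom_group_of_central.{u} {N : Type u} [Monoid N] [IsLeftCancelMul N]
    {z : N} (hz : z ∈ Submonoid.center N) (hdvd : ∀ x, ∃ y, ∃ k : ℕ, x * y = z ^ k) :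
    ∃ (Q : Type u) (_ : Group Q) (f : N →* Q), Function.Injective f := by
  let S := Submonoid.powers z
  let _ : OreLocalization.OreSet S := oreSetOfLeCenter (Submonoid.powers_le.2 hz)
  let f : N →* OreLocalization S N := OreLocalization.numeratorHom
  have hunit (x : N) : IsUnit (f x) := by
    obtain ⟨y, k, hxy⟩ := hdvd x
    have hpow : z ^ k ∈ Submonoid.center N := pow_mem hz k
    have hyx : y * x = z ^ k :=
      mul_left_cancel (a := x) (by rw [← mul_assoc, hxy, Submonoid.mem_center_iff.1 hpow])
    have hcomm : Commute (f x) (f y) := (show Commute x y from hxy.trans hyx.symm).map f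
    refine (hcomm.isUnit_mul_iff.1 ?_).1
    rw [← map_mul, hxy]
    exact OreLocalization.numerator_isUnit (⟨z ^ k, k, rfl⟩ : S)
  have hinj : Function.Injective f := by
    intro a b hab
    obtain ⟨u, v, hnum, hden⟩ := OreLocalization.oreDiv_eq_iff.1 hab
    have huv : (u : N) = v := by simpa only [OneMemClass.coe_one, mul_one] using hden
    rw [Submonoid.smul_def, huv] at hnum
    exact (mul_left_cancel hnum).symm
  exact ⟨_, inferInstance, IsUnit.liftRight f hunit, fun a b hab ↦
    hinj (congrArg Units.val hab)⟩

end GroupOfFractions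

section Meets

variable {α : Type*} [PartialOrder α] [IsStronglyAtomic α] {len : α → ℤ}

theorem exists_isGreatest_Icc_inter_Icc (hlen : StrictMono len)
    (hlub : ∀ e p q : α, e ⋖ p → e ⋖ q → ∃ j, IsLUB {p, q} j) {e a b : α} (ha : e ≤ a)
    (hb : e ≤ b) : ∃ g, IsGreatest (Set.Icc e a ∩ Set.Icc e b) g := by
  obtain ⟨n, hn⟩ : ∃ n : ℕ, len a - len e < n := ⟨(len a - len e).toNat + 1, by omega⟩
  induction n generalizing e with
  | zero =>
    have := hlen.monotone ha
    omega
  | succ n ih =>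
    have ih' {p : α} (hp : e ⋖ p) (hpa : p ≤ a) (hpb : p ≤ b) :
        ∃ g, IsGreatest (Set.Icc p a ∩ Set.Icc p b) g :=
      ih hpa hpb (by have := hlen hp.lt; omega)
    by_cases hp : ∃ p, e ⋖ p ∧ p ≤ a ∧ p ≤ b
    · obtain ⟨p, hp, hpa, hpb⟩ := hp
      obtain ⟨g, ⟨⟨hpg, hga⟩, -, hgb⟩, hg⟩ := ih' hp hpa hpb
      refine ⟨g, ⟨⟨hp.le.trans hpg, hga⟩, hp.le.trans hpg, hgb⟩, ?_⟩
      rintro h ⟨⟨heh, hha⟩, -, hhb⟩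
      rcases heh.eq_or_lt with rfl | heh
      · exact hp.le.trans hpg
      obtain ⟨q, hq, hqh⟩ := exists_covBy_le_of_lt heh
      have hqa := hqh.trans hha
      have hqb := hqh.trans hhb
      obtain ⟨g', ⟨⟨-, hga'⟩, -, hgb'⟩, hg'⟩ := ih' hq hqa hqb
      obtain ⟨j, hj⟩ := hlub e p q hp hq
      have hjg' : j ≤ g' := hg' ⟨⟨hj.1 (by simp), hj.2 (by simp [hpa, hqa])⟩,
        hj.1 (by simp), hj.2 (by simp [hpb, hqb])⟩
      have hpg' : p ≤ g' := (hj.1 (by simp)).trans hjg'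
      exact (hg' ⟨⟨hqh, hha⟩, hqh, hhb⟩).trans (hg ⟨⟨hpg', hga'⟩, hpg', hgb'⟩)
    · refine ⟨e, ⟨⟨le_rfl, ha⟩, le_rfl, hb⟩, ?_⟩
      rintro h ⟨⟨heh, hha⟩, -, hhb⟩
      by_contra hlt
      obtain ⟨q, hq, hqh⟩ := exists_covBy_le_of_lt (heh.lt_of_not_ge hlt)
      exact hp ⟨q, hq, hqh.trans hha, hqh.trans hhb⟩

theorem exists_isGLB_pair [IsCodirectedOrder α] (hlen : StrictMono len)
    (hlub : ∀ e p q : α, e ⋖ p → e ⋖ q → ∃ j, IsLUB {p, q} j) (a b : α) :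
    ∃ g, IsGLB {a, b} g := by
  obtain ⟨e, hea, heb⟩ := exists_le_le a b
  obtain ⟨g, ⟨⟨heg, hga⟩, -, hgb⟩, hg⟩ := exists_isGreatest_Icc_inter_Icc hlen hlub hea heb
  refine ⟨g, by simp [hga, hgb], fun h hh ↦ ?_⟩
  have hha : h ≤ a := hh (by simp)
  have hhb : h ≤ b := hh (by simp)
  obtain ⟨f, hfe, hfh⟩ := exists_le_le e h
  obtain ⟨g', ⟨⟨-, hga'⟩, -, hgb'⟩, hg'⟩ :=
    exists_isGreatest_Icc_inter_Icc hlen hlub (hfh.trans hha) (hfh.trans hhb)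
  have hgg' : g ≤ g' := hg' ⟨⟨hfe.trans heg, hga⟩, hfe.trans heg, hgb⟩
  have heg' : e ≤ g' := heg.trans hgg'
  exact (hg' ⟨⟨hfh, hha⟩, hfh, hhb⟩).trans (hg ⟨⟨heg', hga'⟩, heg', hgb'⟩)

end Meets

section Drift

variable {α : Type*} {len : α → ℤ} {r s : ℤ}

theorem len_iterate {R : α → α} (hR : ∀ a, len (R a) = len a + r) (n : ℕ) (a : α) :
    len (R^[n] a) = len a + n * r := by
  induction n with
  | zero => simp
  | succ n ih =>
    rw [Function.iterate_succ_apply', hR, ih]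
    push_cast
    ring

theorem le_of_forall_natCast_mul_le {c d K : ℤ} (h : ∀ j : ℕ, j * c ≤ j * d + K) : c ≤ d := by
  by_contra! hlt
  have hj := h (K.toNat + 1)
  have hK := K.self_le_toNat
  push_cast at hj
  nlinarith

-- Both orbits move at a constant average speed, and the lower one cannot be the faster.
theorem drift_le_drift [Preorder α] (hlen : Monotone len) {F R S : α → α} (hF : Monotone F)
    (hFR : Function.Commute F R) (hFS : Function.Commute F S)
    (hR : ∀ a, len (R a) = len a + r) (hS : ∀ a, len (S a) = len a + s)
    {M l : ℕ} {a b : α} (hab : a ≤ b) (ha : F^[M] a = R a) (hb : F^[l] b = S b) :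
    l * r ≤ M * s := by
  have iterate_mul_eq {T : α → α} {m : ℕ} {c : α} (hFT : Function.Commute F T)
      (hc : F^[m] c = T c) (k : ℕ) : F^[m * k] c = T^[k] c := by
    rw [Function.iterate_mul]
    exact (hFT.iterate_left m).iterate_eq_of_map_eq k hc
  refine le_of_forall_natCast_mul_le (K := len b - len a) fun j ↦ ?_
  have hle : F^[M * (l * j)] a ≤ F^[l * (M * j)] b := by
    rw [show l * (M * j) = M * (l * j) by ring]
    exact hF.iterate _ hab
  have hlen_le := hlen hle
  rw [iterate_mul_eq hFR ha, iterate_mul_eq hFS hb, len_iterate hR, len_iterate hS] at hlen_le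
  push_cast at hlen_le
  linarith

end Drift

section InfOfCommutingMaps

variable {α : Type*} [SemilatticeInf α] {X D R : InfHom α α}

theorem monotone_inf_infHom (X D : InfHom α α) : Monotone (X ⊓ D) :=
  (OrderHomClass.mono X).inf (OrderHomClass.mono D)

theorem commute_inf_infHom (hX : Function.Commute X R) (hD : Function.Commute D R) :
    Function.Commute (X ⊓ D) R := fun a ↦ by
  simp only [Pi.inf_apply, hX a, hD a, map_inf]

variable {len : α → ℤ} {a b : α} {l M : ℕ}

theorem le_of_iterate_inf_eq (hlen : StrictMono len) {r d : ℤ} (hXD : Function.Commute X D)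
    (hXR : Function.Commute X R) (hDR : Function.Commute D R) (hR : ∀ a, len (R a) = len a + r)
    (hD : ∀ a, len (D a) = len a + d) (hM : 0 < M) (ha : (X ⊓ D)^[M] a = R a) (hba : b ≤ a)
    (hb : D b ≤ X b) : D a ≤ X a := by
  have hF := monotone_inf_infHom X D
  have hFR : Function.Commute (X ⊓ D) R := commute_inf_infHom hXR hDR
  have hFD : Function.Commute (X ⊓ D) D := commute_inf_infHom hXD (Function.Commute.refl _)
  have hFb : (X ⊓ D)^[1] b = D b := inf_eq_right.2 hb
  have hdrift : M * d ≤ r := by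
    simpa using drift_le_drift hlen.monotone hF hFD hFR hD hR hba hFb ha
  obtain ⟨M, rfl⟩ := Nat.exists_eq_succ_of_ne_zero hM.ne'
  have hle : R a ≤ D^[M] (X a ⊓ D a) := by
    rw [← ha, Function.iterate_succ_apply]
    exact hF.iterate_le_of_le inf_le_right M _
  have hlen_le := hlen.monotone hle
  rw [hR, len_iterate hD] at hlen_le
  refine inf_eq_right.1 (inf_le_right.eq_of_not_lt fun hlt ↦ ?_)
  have hlen_lt := hlen hlt
  rw [hD] at hlen_lt
  push_cast at hdrift
  linarith

theorem inf_iterate_le_iterate_inf (hD : ∀ a, a ≤ D a) (ha : a ≤ X a) (j : ℕ) :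
    X a ⊓ D^[j] a ≤ (X ⊓ D)^[j] a := by
  have hF := monotone_inf_infHom X D
  have ha' (j : ℕ) : a ≤ (X ⊓ D)^[j] a := by
    simpa using hF.monotone_iterate_of_le_map (le_inf ha (hD a)) (Nat.zero_le j)
  induction j with
  | zero => exact inf_le_right
  | succ j ih =>
    rw [Function.iterate_succ_apply', Function.iterate_succ_apply']
    refine le_inf (inf_le_left.trans (OrderHomClass.mono X (ha' j))) ?_
    calc X a ⊓ D (D^[j] a) ≤ D (X a) ⊓ D (D^[j] a) := inf_le_inf_right _ (hD _)
      _ = D (X a ⊓ D^[j] a) := (map_inf D _ _).symm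
      _ ≤ D ((X ⊓ D)^[j] a) := OrderHomClass.mono D ih

theorem iterate_inf_eq_of_inf_le (hXD : Function.Commute X D) (hD : ∀ a, a ≤ D a) (hl : 0 < l)
    (hb : b ≤ X b) (hbl : X b ≤ D^[l] b) (hXX : X (X b) ⊓ D^[l] b ≤ X b) :
    (X ⊓ D)^[l] b = X b := by
  have hDl : D^[l] b ≤ X (D^[l] b) := by
    rw [(hXD.iterate_right l).eq]
    exact (OrderHomClass.mono D).iterate l hb
  have iterate_inf_le (j : ℕ) : X^[j + 1] b ⊓ D^[l] b ≤ X b := by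
    induction j with
    | zero => exact inf_le_left
    | succ j ih =>
      rw [Function.iterate_succ_apply']
      refine le_trans (le_inf ?_ inf_le_right) hXX
      calc X (X^[j + 1] b) ⊓ D^[l] b ≤ X (X^[j + 1] b) ⊓ X (D^[l] b) := inf_le_inf_left _ hDl
        _ = X (X^[j + 1] b ⊓ D^[l] b) := (map_inf X _ _).symm
        _ ≤ X (X b) := OrderHomClass.mono X ih
  have hF := monotone_inf_infHom X D
  obtain ⟨j, rfl⟩ := Nat.exists_eq_succ_of_ne_zero hl.ne'
  refine le_antisymm ?_ ((le_inf le_rfl hbl).trans (inf_iterate_le_iterate_inf hD hb _))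
  have hle : (X ⊓ D)^[j + 1] b ≤ X^[j + 1] b ⊓ D^[j + 1] b :=
    le_inf (hF.iterate_le_of_le inf_le_left _ b) (hF.iterate_le_of_le inf_le_right _ b)
  exact hle.trans (iterate_inf_le j)

theorem iterate_inf_eq_of_le (hlen : StrictMono len) {r x : ℤ} (hXD : Function.Commute X D)
    (hXR : Function.Commute X R) (hDR : Function.Commute D R) (hD : ∀ a, a ≤ D a)
    (hR : ∀ a, len (R a) = len a + r) (hX : ∀ a, len (X a) = len a + x)
    (hM : 0 < M) (ha : (X ⊓ D)^[M] a = R a) (hXa : a ≤ X a) (hal : X a ≤ D^[l] a) (hab : a ≤ b)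
    (hb : (X ⊓ D)^[l] b = X b) : (X ⊓ D)^[l] a = X a := by
  have hF := monotone_inf_infHom X D
  have hFR : Function.Commute (X ⊓ D) R := commute_inf_infHom hXR hDR
  have hFX : Function.Commute (X ⊓ D) X := commute_inf_infHom (Function.Commute.refl _) hXD.symm
  have hdrift : l * r ≤ M * x := drift_le_drift hlen.monotone hF hFR hFX hR hX hab ha hb
  have hle : X a ≤ (X ⊓ D)^[l] a :=
    (le_inf le_rfl hal).trans (inf_iterate_le_iterate_inf hD hXa l)
  refine (hle.eq_of_not_lt fun hlt ↦ ?_).symm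
  obtain ⟨M, rfl⟩ := Nat.exists_eq_succ_of_ne_zero hM.ne'
  have hGX : Function.Commute X ((X ⊓ D)^[l]) := (hFX.iterate_left l).symm
  have hle' : X^[M] ((X ⊓ D)^[l] a) ≤ R^[l] a := by
    calc X^[M] ((X ⊓ D)^[l] a)
        ≤ ((X ⊓ D)^[l])^[M] ((X ⊓ D)^[l] a) :=
          hGX.iterate_le_of_map_le (OrderHomClass.mono X) (hF.iterate l)
            ((hGX a).trans_le (hF.iterate l hle)) M
      _ = ((X ⊓ D)^[M + 1])^[l] a := by
          rw [← Function.iterate_succ_apply, ← Function.iterate_mul, ← Function.iterate_mul,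
            mul_comm]
      _ = R^[l] a := (hFR.iterate_left _).iterate_eq_of_map_eq l ha
  have hlen_le := hlen.monotone hle'
  have hlen_lt := hlen hlt
  rw [len_iterate hX, len_iterate hR] at hlen_le
  rw [hX] at hlen_lt
  push_cast at hdrift
  linarith

theorem inf_le_of_iterate_inf_eq (hXD : Function.Commute X D) (hD : ∀ a, a ≤ D a) (ha : a ≤ X a)
    (hl : 2 ≤ l) (hFa : (X ⊓ D)^[l] a = X a) : X (X a) ⊓ D (X a) ⊓ D^[l] a ≤ X a := by
  have hF := monotone_inf_infHom X D
  obtain ⟨k, rfl⟩ := Nat.exists_eq_add_of_le' hl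
  have hXF : X (X a) ⊓ D (X a) ≤ X ((X ⊓ D)^[k + 1] a) := by
    rw [← hXD a, ← map_inf]
    refine OrderHomClass.mono X ?_
    simpa using hF.monotone_iterate_of_le_map (le_inf ha (hD a)) (Nat.le_add_left 1 k)
  have hDF : D (X a) ⊓ D^[k + 2] a ≤ D ((X ⊓ D)^[k + 1] a) := by
    rw [Function.iterate_succ_apply', ← map_inf]
    exact OrderHomClass.mono D (inf_iterate_le_iterate_inf hD ha (k + 1))
  calc X (X a) ⊓ D (X a) ⊓ D^[k + 2] a
      ≤ X ((X ⊓ D)^[k + 1] a) ⊓ D ((X ⊓ D)^[k + 1] a) :=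
        le_inf (inf_le_left.trans hXF) ((inf_le_inf_right _ inf_le_right).trans hDF)
    _ = (X ⊓ D)^[k + 2] a := (Function.iterate_succ_apply' (X ⊓ D) (k + 1) a).symm
    _ = X a := hFa

end InfOfCommutingMaps

/-- The monoid of positive braids on `m + 1` strands. -/
abbrev PositiveBraidMonoid (m : ℕ) := ArtinMonoid (SimpleGraph.pathGraph m)

namespace PositiveBraidMonoid

open ArtinMonoid SimpleGraph

variable {m : ℕ}

theorem pathGraph_cliqueFree_three (m : ℕ) : (pathGraph m).CliqueFree 3 :=
  (pathGraph.bicoloring m).colorable.cliqueFree (by simp)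

instance : IsLeftCancelMul (PositiveBraidMonoid m) :=
  isLeftCancelMul (pathGraph_cliqueFree_three m)

/-- The generators indexed by natural numbers, with junk value `1` out of range. -/
def genNat (m i : ℕ) : PositiveBraidMonoid m :=
  if h : i < m then gen (pathGraph m) ⟨i, h⟩ else 1

theorem genNat_of_lt {i : ℕ} (h : i < m) : genNat m i = gen (pathGraph m) ⟨i, h⟩ := dif_pos h

theorem isBraidSeq_genNat (m : ℕ) : IsBraidSeq (genNat m) m where
  comm i j hij hj := by
    rw [genNat_of_lt hj, genNat_of_lt (by omega)]
    have hadj : ¬(pathGraph m).Adj ⟨i, by omega⟩ ⟨j, hj⟩ := by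
      rw [pathGraph_adj]
      simp only
      omega
    exact gen_comm hadj
  braid i hi := by
    rw [genNat_of_lt hi, genNat_of_lt (by omega)]
    have hadj : (pathGraph m).Adj ⟨i, by omega⟩ ⟨i + 1, hi⟩ := pathGraph_adj.2 (Or.inl rfl)
    exact gen_braid hadj

/-- The fundamental braid, as a positive word. -/
def fundamental (m : ℕ) : PositiveBraidMonoid m := halfTwist (genNat m) m

theorem gen_mul_fundamental (i : Fin m) :
    gen (pathGraph m) i * fundamental m = fundamental m * gen (pathGraph m) i.rev := by
  have h := (isBraidSeq_genNat m).semiconjBy_halfTwist le_rfl i.isLt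
  rw [genNat_of_lt i.isLt, genNat_of_lt (by omega)] at h
  have hrev : (⟨m - 1 - i, by omega⟩ : Fin m) = i.rev := by
    ext
    rw [Fin.val_rev]
    simp only
    omega
  rw [← hrev]
  exact h.eq.symm

theorem fundamental_eq_gen_mul (i : Fin m) : ∃ r, fundamental m = gen (pathGraph m) i * r := by
  obtain ⟨r, hr⟩ := (isBraidSeq_genNat m).halfTwist_eq_mul le_rfl i.isLt
  exact ⟨r, by rw [fundamental, hr, genNat_of_lt i.isLt]⟩

theorem fundamental_sq_mem_center (m : ℕ) : fundamental m ^ 2 ∈ Submonoid.center _ := by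
  refine Submonoid.mem_center_iff.2 fun x ↦ ?_
  induction x using gen_induction with
  | one => rw [one_mul, mul_one]
  | gen_mul i x ih =>
    have h : gen (pathGraph m) i * fundamental m ^ 2 = fundamental m ^ 2 * gen (pathGraph m) i := by
      rw [pow_two, ← mul_assoc, gen_mul_fundamental, mul_assoc, gen_mul_fundamental, Fin.rev_rev,
        mul_assoc]
    rw [mul_assoc, ih, ← mul_assoc, h, mul_assoc]

theorem exists_mul_eq_fundamental_sq_pow (x : PositiveBraidMonoid m) :
    ∃ y, ∃ k : ℕ, x * y = (fundamental m ^ 2) ^ k := by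
  induction x using gen_induction with
  | one => exact ⟨1, 0, by rw [one_mul, pow_zero]⟩
  | gen_mul i x ih =>
    obtain ⟨y, k, hxy⟩ := ih
    obtain ⟨r, hr⟩ := fundamental_eq_gen_mul i
    have hcenter := Submonoid.mem_center_iff.1 (pow_mem (fundamental_sq_mem_center m) k)
    refine ⟨y * (r * fundamental m), k + 1, ?_⟩
    calc gen (pathGraph m) i * x * (y * (r * fundamental m))
        = gen (pathGraph m) i * ((x * y) * (r * fundamental m)) := by simp only [mul_assoc]
      _ = (gen (pathGraph m) i * r) * fundamental m * (fundamental m ^ 2) ^ k := by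
        rw [hxy, ← hcenter]; simp only [mul_assoc]
      _ = (fundamental m ^ 2) ^ (k + 1) := by rw [← hr, ← pow_two, ← pow_succ']

theorem exists_injective_hom_group (m : ℕ) :
    ∃ (Q : Type) (_ : Group Q) (f : PositiveBraidMonoid m →* Q), Function.Injective f :=
  exists_injective_hom_group_of_central (fundamental_sq_mem_center m)
    exists_mul_eq_fundamental_sq_pow

end PositiveBraidMonoid

namespace BraidGroup

open ArtinMonoid SimpleGraph PositiveBraidMonoid

variable {n : ℕ}

section PositiveBraids

theorem lift_braidRel_eq_one {H : Type*} [Group H] {f : Fin (n - 1) → H}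
    (comm : ∀ i j : Fin (n - 1), (i : ℕ) + 1 < j → f i * f j = f j * f i)
    (braid : ∀ i j : Fin (n - 1), (i : ℕ) + 1 = j → f i * f j * f i = f j * f i * f j) :
    ∀ r ∈ braidRels n, FreeGroup.lift f r = 1 := by
  rintro r (⟨i, j, h, rfl⟩ | ⟨i, j, h, rfl⟩)
  · simp only [map_mul, map_inv, FreeGroup.lift_apply_of]
    rw [comm i j h, mul_inv_cancel_right, mul_inv_cancel]
  · simp only [map_mul, map_inv, FreeGroup.lift_apply_of]
    rw [braid i j h, mul_inv_cancel]

theorem σ_comm {i j : Fin (n - 1)} (h : (i : ℕ) + 1 < j) : σ i * σ j = σ j * σ i := by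
  have hmem : PresentedGroup.mk (braidRels n) (.of i * .of j * (.of i)⁻¹ * (.of j)⁻¹) = 1 :=
    PresentedGroup.one_of_mem (Or.inl ⟨i, j, h, rfl⟩)
  simp only [map_mul, map_inv] at hmem
  rwa [mul_inv_eq_one, mul_inv_eq_iff_eq_mul] at hmem

theorem σ_braid {i j : Fin (n - 1)} (h : (i : ℕ) + 1 = j) :
    σ i * σ j * σ i = σ j * σ i * σ j := by
  have hmem : PresentedGroup.mk (braidRels n)
      ((.of i * .of j * .of i) * (.of j * .of i * .of j)⁻¹) = 1 :=
    PresentedGroup.one_of_mem (Or.inr ⟨i, j, h, rfl⟩)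
  simp only [map_mul, map_inv] at hmem
  rwa [mul_inv_eq_one] at hmem

theorem σ_comm_of_not_adj {i j : Fin (n - 1)} (h : ¬(pathGraph (n - 1)).Adj i j) :
    σ i * σ j = σ j * σ i := by
  rw [pathGraph_adj] at h
  rcases lt_trichotomy i j with hij | rfl | hij
  · exact σ_comm (by omega)
  · rfl
  · exact (σ_comm (by omega)).symm

theorem σ_braid_of_adj {i j : Fin (n - 1)} (h : (pathGraph (n - 1)).Adj i j) :
    σ i * σ j * σ i = σ j * σ i * σ j :=
  (pathGraph_adj.1 h).elim σ_braid fun hji ↦ (σ_braid hji).symm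

/-- The canonical map from the monoid of positive braids to the braid group. -/
def ofPositive (n : ℕ) : PositiveBraidMonoid (n - 1) →* BraidGroup n :=
  PresentedMonoid.lift σ <| by
    rintro _ _ (h | h)
    · exact σ_comm_of_not_adj h
    · exact σ_braid_of_adj h

theorem ofPositive_gen (i : Fin (n - 1)) : ofPositive n (gen _ i) = σ i := rfl

theorem ofPositive_injective (n : ℕ) : Function.Injective (ofPositive n) := by
  obtain ⟨Q, _, f, hf⟩ := exists_injective_hom_group (n - 1)
  let g : BraidGroup n →* Q := PresentedGroup.toGroup (f := fun i : Fin (n - 1) ↦ f (gen _ i)) <|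
    lift_braidRel_eq_one
      (fun i j h ↦ by
        have hadj : ¬(pathGraph (n - 1)).Adj i j := by rw [pathGraph_adj]; omega
        rw [← map_mul, gen_comm hadj, map_mul])
      (fun i j h ↦ by
        have hadj : (pathGraph (n - 1)).Adj i j := pathGraph_adj.2 (Or.inl h)
        rw [← map_mul, ← map_mul, gen_braid hadj, map_mul, map_mul])
  have hfg : g.comp (ofPositive n) = f :=
    PresentedMonoid.ext (ArtinRel _) fun i ↦
      show g (σ i) = f (gen _ i) from PresentedGroup.toGroup.of _
  refine Function.Injective.of_comp (f := g) ?_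
  rw [← MonoidHom.coe_comp, hfg]
  exact hf

theorem ofPositive_fundamental (n : ℕ) : ofPositive n (fundamental (n - 1)) = Δ n := by
  have hσ : ofPositive n ∘ genNat (n - 1) = σ' n := by
    ext i
    rw [Function.comp_apply, genNat, σ']
    split
    · exact ofPositive_gen _
    · exact map_one _
  rw [fundamental, map_halfTwist, hσ]
  rfl

theorem isPositive_iff {x : BraidGroup n} : IsPositive x ↔ ∃ a, ofPositive n a = x := by
  have hrange : Set.range (σ (n := n)) =
      ofPositive n '' Set.range (PresentedMonoid.of (ArtinRel (pathGraph (n - 1)))) := by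
    rw [← Set.range_comp]
    rfl
  rw [IsPositive, positives, hrange, ← MonoidHom.map_mclosure, PresentedMonoid.closure_range_of,
    ← MonoidHom.mrange_eq_map, MonoidHom.mem_mrange]

theorem isPositive_ofPositive (a : PositiveBraidMonoid (n - 1)) : IsPositive (ofPositive n a) :=
  isPositive_iff.2 ⟨a, rfl⟩

theorem isPositive_σ (i : Fin (n - 1)) : IsPositive (σ i) :=
  isPositive_ofPositive (gen _ i)

/-- The abelianization of the braid group, an additive invariant that is strictly monotone for the
prefix order. -/
def exponentSum (x : BraidGroup n) : ℤ :=
  (PresentedGroup.toGroup (f := fun _ ↦ Multiplicative.ofAdd 1)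
    (lift_braidRel_eq_one (fun _ _ _ ↦ rfl) (fun _ _ _ ↦ rfl)) :
    BraidGroup n →* Multiplicative ℤ) x |>.toAdd

theorem exponentSum_mul (x y : BraidGroup n) :
    exponentSum (x * y) = exponentSum x + exponentSum y := by
  simp only [exponentSum, map_mul, toAdd_mul]

theorem exponentSum_inv (x : BraidGroup n) : exponentSum x⁻¹ = -exponentSum x := by
  simp only [exponentSum, map_inv, toAdd_inv]

theorem exponentSum_ofPositive (a : PositiveBraidMonoid (n - 1)) :
    exponentSum (ofPositive n a) = length a := by
  induction a using gen_induction with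
  | one => rfl
  | gen_mul i a ih =>
    rw [map_mul, exponentSum_mul, ih, length_gen_mul, add_comm, Nat.cast_succ]
    rfl

end PositiveBraids

section PrefixOrder

theorem IsPositive.exponentSum_nonneg {x : BraidGroup n} (hx : IsPositive x) :
    0 ≤ exponentSum x := by
  obtain ⟨a, rfl⟩ := isPositive_iff.1 hx
  rw [exponentSum_ofPositive]
  exact Nat.cast_nonneg _

theorem IsPositive.eq_one_or_eq_σ_mul {x : BraidGroup n} (hx : IsPositive x) :
    x = 1 ∨ ∃ i y, IsPositive y ∧ x = σ i * y := by
  obtain ⟨a, rfl⟩ := isPositive_iff.1 hx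
  induction a using gen_induction with
  | one => exact Or.inl (map_one _)
  | gen_mul i a => exact Or.inr ⟨i, _, isPositive_ofPositive a, by rw [map_mul, ofPositive_gen]⟩

theorem exponentSum_σ (i : Fin (n - 1)) : exponentSum (σ i) = 1 := rfl

theorem IsPositive.eq_one_of_exponentSum_nonpos {x : BraidGroup n} (hx : IsPositive x)
    (h : exponentSum x ≤ 0) : x = 1 := by
  rcases hx.eq_one_or_eq_σ_mul with rfl | ⟨i, y, hy, rfl⟩
  · rfl
  · have := hy.exponentSum_nonneg
    rw [exponentSum_mul, exponentSum_σ] at h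
    omega

/-- The prefix order: `a ≤ b` iff `a⁻¹ * b` is a positive braid. -/
instance : PartialOrder (BraidGroup n) where
  le a b := IsPositive (a⁻¹ * b)
  le_refl a := by
    rw [inv_mul_cancel]
    exact (positives n).one_mem
  le_trans a b c hab hbc := by
    have h : a⁻¹ * c = a⁻¹ * b * (b⁻¹ * c) := by group
    rw [h]
    exact (positives n).mul_mem hab hbc
  le_antisymm a b hab hba := by
    have h := hba.exponentSum_nonneg
    rw [exponentSum_mul, exponentSum_inv] at h
    refine inv_mul_eq_one.1 (hab.eq_one_of_exponentSum_nonpos ?_)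
    rw [exponentSum_mul, exponentSum_inv]
    omega

theorem le_def {a b : BraidGroup n} : a ≤ b ↔ IsPositive (a⁻¹ * b) := Iff.rfl

theorem one_le_iff_isPositive {a : BraidGroup n} : 1 ≤ a ↔ IsPositive a := by
  rw [le_def, inv_one, one_mul]

theorem leftDvd_iff_le {a b : BraidGroup n} : LeftDvd a b ↔ a ≤ b :=
  ⟨fun ⟨p, hp, h⟩ ↦ by rwa [le_def, ← h, inv_mul_cancel_left],
    fun h ↦ ⟨a⁻¹ * b, h, mul_inv_cancel_left a b⟩⟩

instance : MulLeftMono (BraidGroup n) where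
  elim a b c h := by
    change IsPositive _
    rwa [mul_inv_rev, mul_assoc, inv_mul_cancel_left]

theorem one_le_σ (i : Fin (n - 1)) : 1 ≤ σ i := one_le_iff_isPositive.2 (isPositive_σ i)

theorem exponentSum_strictMono : StrictMono (exponentSum (n := n)) := by
  intro a b h
  by_contra! hle
  refine h.ne (inv_mul_eq_one.1 (IsPositive.eq_one_of_exponentSum_nonpos (le_def.1 h.le) ?_))
  rw [exponentSum_mul, exponentSum_inv]
  omega

theorem covBy_mul_σ (a : BraidGroup n) (i : Fin (n - 1)) : a ⋖ a * σ i := by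
  have hsum : exponentSum (a * σ i) = exponentSum a + 1 := by rw [exponentSum_mul, exponentSum_σ]
  refine ⟨(le_mul_of_one_le_right' (one_le_σ i)).lt_of_ne fun h ↦ ?_, fun b hab hb ↦ ?_⟩
  · have := congrArg exponentSum h
    omega
  · have := exponentSum_strictMono hab
    have := exponentSum_strictMono hb
    omega

theorem exists_mul_σ_le {a b : BraidGroup n} (h : a < b) : ∃ i, a * σ i ≤ b := by
  rcases IsPositive.eq_one_or_eq_σ_mul (le_def.1 h.le) with hab | ⟨i, y, hy, hab⟩
  · exact absurd (inv_mul_eq_one.1 hab) h.ne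
  · refine ⟨i, ?_⟩
    rwa [le_def, mul_inv_rev, mul_assoc, hab, inv_mul_cancel_left]

theorem exists_eq_mul_σ_of_covBy {a b : BraidGroup n} (h : a ⋖ b) : ∃ i, b = a * σ i := by
  obtain ⟨i, hi⟩ := exists_mul_σ_le h.lt
  have hlt := (covBy_mul_σ a i).lt
  exact ⟨i, ((h.eq_or_eq hlt.le hi).resolve_left hlt.ne').symm⟩

instance : IsStronglyAtomic (BraidGroup n) where
  exists_covBy_le_of_lt a _ h :=
    (exists_mul_σ_le h).elim fun i hi ↦ ⟨a * σ i, covBy_mul_σ a i, hi⟩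

theorem σ_le_iff {i : Fin (n - 1)} {x : BraidGroup n} :
    σ i ≤ x ↔ ∃ a, x = σ i * ofPositive n a := by
  rw [le_def, isPositive_iff]
  exact exists_congr fun a ↦ by rw [eq_inv_mul_iff_mul_eq, eq_comm]

theorem isLUB_σ_pair (i j : Fin (n - 1)) :
    IsLUB {σ i, σ j} (σ i * ofPositive n (cofactor (pathGraph (n - 1)) i j)) := by
  have le_mul_ofPositive (x : BraidGroup n) (a) : x ≤ x * ofPositive n a :=
    le_mul_of_one_le_right' (one_le_iff_isPositive.2 (isPositive_ofPositive a))
  constructor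
  · have hcof := congrArg (ofPositive n) (gen_mul_cofactor (G := pathGraph (n - 1)) i j)
    simp only [map_mul, ofPositive_gen] at hcof
    rintro _ (rfl | rfl)
    · exact le_mul_ofPositive _ _
    · rw [hcof]
      exact le_mul_ofPositive _ _
  · intro x hx
    obtain ⟨a, ha⟩ := σ_le_iff.1 (hx (Set.mem_insert _ _))
    obtain ⟨b, hb⟩ := σ_le_iff.1 (hx (Set.mem_insert_of_mem _ rfl))
    have hab : gen _ i * a = gen _ j * b := ofPositive_injective n <| by
      rw [map_mul, map_mul, ofPositive_gen, ofPositive_gen, ← ha, hb]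
    obtain ⟨c, rfl, -⟩ := factorsThroughLcm (pathGraph_cliqueFree_three _) hab
    rw [ha, map_mul, ← mul_assoc]
    exact le_mul_ofPositive _ _

theorem exists_isLUB_of_covBy (e p q : BraidGroup n) (hp : e ⋖ p) (hq : e ⋖ q) :
    ∃ j, IsLUB {p, q} j := by
  obtain ⟨i, rfl⟩ := exists_eq_mul_σ_of_covBy hp
  obtain ⟨j, rfl⟩ := exists_eq_mul_σ_of_covBy hq
  have h := (OrderIso.mulLeft e).isLUB_image'.2 (isLUB_σ_pair i j)
  rw [Set.image_pair] at h
  exact ⟨_, h⟩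

end PrefixOrder

section FundamentalBraid

theorem one_le_Δ (n : ℕ) : 1 ≤ Δ n := by
  rw [one_le_iff_isPositive, ← ofPositive_fundamental]
  exact isPositive_ofPositive _

theorem σ_le_Δ (i : Fin (n - 1)) : σ i ≤ Δ n := by
  obtain ⟨r, hr⟩ := fundamental_eq_gen_mul i
  exact σ_le_iff.2 ⟨r, by rw [← ofPositive_fundamental, hr, map_mul, ofPositive_gen]⟩

theorem σ_mul_Δ (i : Fin (n - 1)) : σ i * Δ n = Δ n * σ i.rev := by
  simpa only [map_mul, ofPositive_gen, ofPositive_fundamental] using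
    congrArg (ofPositive n) (gen_mul_fundamental i)

theorem Δ_conj_σ (i : Fin (n - 1)) : Δ n * σ i * (Δ n)⁻¹ = σ i.rev := by
  rw [mul_inv_eq_iff_eq_mul, σ_mul_Δ, Fin.rev_rev]

theorem τ_σ (i : Fin (n - 1)) : τ n (σ i) = σ i.rev := by
  have h : ∃ f : BraidGroup n →* BraidGroup n, ∀ i : Fin (n - 1), f (σ i) = σ i.rev :=
    ⟨(MulAut.conj (Δ n)).toMonoidHom, Δ_conj_σ⟩
  exact Classical.epsilon_spec h i

theorem τ_eq_conj (x : BraidGroup n) : τ n x = Δ n * x * (Δ n)⁻¹ := by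
  have h : τ n = (MulAut.conj (Δ n)).toMonoidHom :=
    PresentedGroup.ext fun i ↦ (τ_σ i).trans (Δ_conj_σ i).symm
  rw [h]
  rfl

theorem τ_τ (x : BraidGroup n) : τ n (τ n x) = x := by
  have h : (τ n).comp (τ n) = MonoidHom.id _ := PresentedGroup.ext fun i ↦
    show τ n (τ n (σ i)) = σ i by rw [τ_σ, τ_σ, Fin.rev_rev]
  exact DFunLike.congr_fun h x

theorem commute_Δ_zpow_even {k : ℤ} (hk : Even k) (x : BraidGroup n) : Commute (Δ n ^ k) x := by
  obtain ⟨k, rfl⟩ := hk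
  have h : Commute (Δ n ^ 2) x := by
    have hτ := τ_τ x
    rw [τ_eq_conj, τ_eq_conj] at hτ
    rw [Commute, SemiconjBy, pow_two]
    conv_rhs => rw [← hτ]
    group
  rw [← two_mul, zpow_mul]
  exact h.zpow_left k

theorem τpow_eq (u : ℤ) (x : BraidGroup n) : τpow u x = Δ n ^ u * x * Δ n ^ (-u) := by
  rw [τpow]
  split_ifs with hu
  · rw [(commute_Δ_zpow_even hu x).eq, zpow_neg, mul_inv_cancel_right]
  · obtain ⟨k, rfl⟩ := Int.not_even_iff_odd.1 hu
    rw [τ_eq_conj, zpow_neg, zpow_add, zpow_one, mul_assoc (Δ n ^ (2 * k)), mul_inv_rev,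
      ← mul_assoc, mul_assoc (Δ n ^ (2 * k)), (commute_Δ_zpow_even (even_two_mul k) _).eq,
      mul_inv_cancel_right]

theorem IsPositive.τpow (u : ℤ) {x : BraidGroup n} (hx : IsPositive x) :
    IsPositive (τpow u x) := by
  have hτ : positives n ≤ (positives n).comap (τ n) := by
    rw [positives, Submonoid.closure_le]
    rintro _ ⟨i, rfl⟩
    rw [SetLike.mem_coe, Submonoid.mem_comap, τ_σ]
    exact isPositive_σ _
  rw [BraidGroup.τpow]
  split_ifs
  exacts [hx, hτ hx]

theorem mul_Δ_zpow_le_mul_Δ_zpow {a b : BraidGroup n} (k : ℤ) (h : a ≤ b) :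
    a * Δ n ^ k ≤ b * Δ n ^ k := by
  have hpos := IsPositive.τpow (-k) (le_def.1 h)
  rw [τpow_eq, neg_neg] at hpos
  rw [le_def]
  convert hpos using 1
  group

theorem mul_Δ_zpow_le_iff {a b : BraidGroup n} {k : ℤ} :
    a * Δ n ^ k ≤ b ↔ a ≤ b * Δ n ^ (-k) := by
  constructor <;> intro h
  · simpa only [zpow_neg, mul_inv_cancel_right] using mul_Δ_zpow_le_mul_Δ_zpow (-k) h
  · simpa only [zpow_neg, inv_mul_cancel_right] using mul_Δ_zpow_le_mul_Δ_zpow k h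

theorem inv_le_Δ_zpow_iff {x : BraidGroup n} {k : ℤ} : x⁻¹ ≤ Δ n ^ k ↔ Δ n ^ (-k) ≤ x := by
  rw [← mul_one x⁻¹, inv_mul_le_iff_le_mul, ← one_mul (Δ n ^ (-k)), mul_Δ_zpow_le_iff, neg_neg]

theorem monotone_Δ_zpow (n : ℕ) : Monotone (Δ n ^ · : ℤ → BraidGroup n) := by
  intro k l h
  obtain ⟨d, rfl⟩ := Int.le.dest h
  simp only [zpow_add]
  exact le_mul_of_one_le_right' (one_le_zpow (one_le_Δ n) (Int.natCast_nonneg d))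

theorem exists_Δ_zpow_le_and_le (x : BraidGroup n) : ∃ k l : ℤ, Δ n ^ k ≤ x ∧ x ≤ Δ n ^ l := by
  have hx : x ∈ Subgroup.closure (Set.range (σ (n := n))) := by
    rw [show Set.range σ = Set.range (PresentedGroup.of (rels := braidRels n)) from rfl,
      PresentedGroup.closure_range_of]
    exact Subgroup.mem_top x
  induction hx using Subgroup.closure_induction with
  | mem x hx =>
    obtain ⟨i, rfl⟩ := hx
    exact ⟨0, 1, by simpa only [zpow_zero] using one_le_σ i,
      by simpa only [zpow_one] using σ_le_Δ i⟩
  | one => exact ⟨0, 0, by rw [zpow_zero], by rw [zpow_zero]⟩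
  | mul x y _ _ hx hy =>
    obtain ⟨k, l, hk, hl⟩ := hx
    obtain ⟨k', l', hk', hl'⟩ := hy
    refine ⟨k + k', l + l', ?_, ?_⟩
    · rw [zpow_add]
      exact (mul_Δ_zpow_le_mul_Δ_zpow k' hk).trans (mul_le_mul_right hk' x)
    · rw [zpow_add]
      exact (mul_le_mul_right hl' x).trans (mul_Δ_zpow_le_mul_Δ_zpow l' hl)
  | inv x _ hx =>
    obtain ⟨k, l, hk, hl⟩ := hx
    refine ⟨-l, -k, ?_, ?_⟩
    · rwa [← inv_le_Δ_zpow_iff, inv_inv]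
    · rwa [inv_le_Δ_zpow_iff, neg_neg]

end FundamentalBraid

end BraidGroup

namespace BraidGroup

variable {n : ℕ}

section Lattice

instance : IsCodirectedOrder (BraidGroup n) where
  directed a b := by
    obtain ⟨k, -, hk, -⟩ := exists_Δ_zpow_le_and_le a
    obtain ⟨l, -, hl, -⟩ := exists_Δ_zpow_le_and_le b
    exact ⟨Δ n ^ min k l, (monotone_Δ_zpow n (min_le_left k l)).trans hk,
      (monotone_Δ_zpow n (min_le_right k l)).trans hl⟩

noncomputable instance : SemilatticeInf (BraidGroup n) :=
  SemilatticeInf.ofIsGLB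
    (fun a b ↦ (exists_isGLB_pair exponentSum_strictMono exists_isLUB_of_covBy a b).choose)
    fun {a b} ↦ (exists_isGLB_pair exponentSum_strictMono exists_isLUB_of_covBy a b).choose_spec

theorem inf_eq_one_iff {a b : BraidGroup n} (ha : 1 ≤ a) (hb : 1 ≤ b) :
    a ⊓ b = 1 ↔ ∀ i, ¬(σ i ≤ a ∧ σ i ≤ b) := by
  constructor
  · intro h i hi
    have hle : σ i ≤ 1 := h ▸ le_inf hi.1 hi.2
    have hlt := (covBy_mul_σ 1 i).lt
    rw [one_mul] at hlt
    exact hlt.not_ge hle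
  · intro h
    refine ((le_inf ha hb).eq_of_not_lt fun hlt ↦ ?_).symm
    obtain ⟨i, hi⟩ := exists_mul_σ_le hlt
    rw [one_mul] at hi
    exact h i (le_inf_iff.1 hi)

theorem mul_inf_eq (y a b : BraidGroup n) : y * (a ⊓ b) = y * a ⊓ y * b :=
  map_inf (OrderIso.mulLeft y) a b

/-- The lattice endomorphism `a ↦ y * a * Δ ^ k`. -/
def shift (y : BraidGroup n) (k : ℤ) : InfHom (BraidGroup n) (BraidGroup n) where
  toFun a := y * a * Δ n ^ k
  map_inf' a b := by
    refine eq_of_forall_le_iff fun c ↦ ?_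
    have h (d : BraidGroup n) : c ≤ d * Δ n ^ k ↔ c * Δ n ^ (-k) ≤ d := by
      rw [mul_Δ_zpow_le_iff, neg_neg]
    rw [mul_inf_eq, le_inf_iff, h, h, h, le_inf_iff]

theorem shift_apply (y a : BraidGroup n) (k : ℤ) : shift y k a = y * a * Δ n ^ k := rfl

theorem inf_mul_Δ_zpow (a b : BraidGroup n) (k : ℤ) :
    (a ⊓ b) * Δ n ^ k = a * Δ n ^ k ⊓ b * Δ n ^ k := by
  have h : shift 1 k (a ⊓ b) = shift 1 k a ⊓ shift 1 k b := map_inf _ a b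
  simpa only [shift_apply, one_mul] using h

end Lattice

section WeightedWord

theorem isPermBraid_iff {a : BraidGroup n} : IsPermBraid a ↔ 1 ≤ a ∧ a ≤ Δ n := by
  rw [IsPermBraid, one_le_iff_isPositive, leftDvd_iff_le]

theorem Δ_le_mul_Δ {a : BraidGroup n} (ha : 1 ≤ a) : Δ n ≤ a * Δ n := by
  simpa only [zpow_one, one_mul] using mul_Δ_zpow_le_mul_Δ_zpow 1 ha

theorem isLeftWeighted_iff {a b : BraidGroup n} (ha : a ≤ Δ n) (hb : 1 ≤ b) :
    IsLeftWeighted a b ↔ a * b ⊓ Δ n = a := by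
  have h : a * b ⊓ Δ n = a * (a⁻¹ * Δ n ⊓ b) := by
    rw [mul_inf_eq, mul_inv_cancel_left, inf_comm]
  rw [h, mul_eq_left, inf_eq_one_iff (by rwa [le_inv_mul_iff_mul_le, mul_one]) hb]
  simp only [IsLeftWeighted, leftDvd_iff_le]

/-- The words that may follow the power of `Δ` in a left weighted form. -/
def IsWeightedWord (L : List (BraidGroup n)) : Prop :=
  (∀ a ∈ L, IsPermBraid a ∧ a ≠ 1 ∧ a ≠ Δ n) ∧ L.IsChain IsLeftWeighted

namespace IsWeightedWord

variable {a : BraidGroup n} {L L₁ L₂ : List (BraidGroup n)}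

theorem one_le_prod (h : IsWeightedWord L) : 1 ≤ L.prod :=
  List.one_le_prod_of_one_le fun a ha ↦ (isPermBraid_iff.1 (h.1 a ha).1).1

theorem of_cons (h : IsWeightedWord (a :: L)) : IsWeightedWord L :=
  ⟨fun b hb ↦ h.1 b (List.mem_cons_of_mem a hb), h.2.tail⟩

theorem prod_inf_Δ (h : IsWeightedWord L) : L.prod ⊓ Δ n = L.head?.getD 1 := by
  induction L with
  | nil => exact inf_eq_left.2 (one_le_Δ n)
  | cons a L ih =>
    obtain ⟨ha, haΔ⟩ := isPermBraid_iff.1 (h.1 a List.mem_cons_self).1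
    rw [List.prod_cons, List.head?_cons, Option.getD_some]
    cases L with
    | nil => rw [List.prod_nil, mul_one, inf_eq_left.2 haΔ]
    | cons b L =>
      have hb := (isPermBraid_iff.1 (h.of_cons.1 b List.mem_cons_self).1).1
      have hab := (isLeftWeighted_iff haΔ hb).1 (List.isChain_cons_cons.1 h.2).1
      have hle : a * (b :: L).prod ⊓ Δ n ≤ a * b := by
        calc a * (b :: L).prod ⊓ Δ n ≤ a * (b :: L).prod ⊓ a * Δ n :=
              inf_le_inf_left _ (Δ_le_mul_Δ ha)
          _ = a * b := by rw [← mul_inf_eq, ih h.of_cons, List.head?_cons, Option.getD_some]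
      refine le_antisymm ((le_inf hle inf_le_right).trans hab.le) (le_inf ?_ haΔ)
      exact le_mul_of_one_le_right' h.of_cons.one_le_prod

theorem prod_append_inf_Δ_zpow (h : IsWeightedWord (L₁ ++ L₂)) :
    (L₁ ++ L₂).prod ⊓ Δ n ^ (L₁.length : ℤ) = L₁.prod := by
  induction L₁ with
  | nil =>
    rw [List.length_nil, Nat.cast_zero, zpow_zero, List.prod_nil]
    exact inf_eq_right.2 h.one_le_prod
  | cons a L ih =>
    have hhead := h.prod_inf_Δ
    rw [List.cons_append] at h hhead ⊢
    rw [List.prod_cons, List.head?_cons, Option.getD_some] at hhead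
    have hΔ : Δ n ^ ((a :: L).length : ℤ) = Δ n * Δ n ^ (L.length : ℤ) := by
      rw [List.length_cons, Nat.cast_succ, add_comm, zpow_one_add]
    have haΔ : a * Δ n ^ (L.length : ℤ) ≤ Δ n * Δ n ^ (L.length : ℤ) :=
      mul_Δ_zpow_le_mul_Δ_zpow _ (hhead ▸ inf_le_right)
    have hle : a * (L ++ L₂).prod ⊓ Δ n * Δ n ^ (L.length : ℤ) ≤ a * Δ n ^ (L.length : ℤ) := by
      nth_rw 2 [← hhead]
      rw [inf_mul_Δ_zpow]
      exact inf_le_inf_right _ (le_mul_of_one_le_right' (one_le_zpow (one_le_Δ n) (by simp)))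
    calc (a :: (L ++ L₂)).prod ⊓ Δ n ^ ((a :: L).length : ℤ)
        = a * (L ++ L₂).prod ⊓ Δ n * Δ n ^ (L.length : ℤ) := by rw [List.prod_cons, hΔ]
      _ = a * (L ++ L₂).prod ⊓ a * Δ n ^ (L.length : ℤ) :=
        le_antisymm (le_inf inf_le_left hle) (inf_le_inf_left _ haΔ)
      _ = (a :: L).prod := by rw [← mul_inf_eq, ih h.of_cons, List.prod_cons]

theorem prod_le_Δ_zpow (h : IsWeightedWord L) : L.prod ≤ Δ n ^ (L.length : ℤ) := by
  have hL := prod_append_inf_Δ_zpow (L₂ := []) (by rwa [List.append_nil])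
  rw [List.append_nil] at hL
  exact hL ▸ inf_le_right

theorem prod_mul_getLast_inv (h : IsWeightedWord L) (hL : L ≠ []) :
    L.prod * (L.getLast hL)⁻¹ = L.prod ⊓ Δ n ^ (L.length - 1 : ℤ) := by
  obtain ⟨L, t, rfl⟩ := L.eq_nil_or_concat'.resolve_left hL
  have hlen : ((L ++ [t]).length - 1 : ℤ) = L.length := by simp
  rw [hlen, h.prod_append_inf_Δ_zpow, List.getLast_append_singleton, List.prod_append,
    List.prod_singleton, mul_inv_cancel_right]

theorem not_Δ_le_prod (h : IsWeightedWord L) (hΔ : Δ n ≠ 1) : ¬Δ n ≤ L.prod := by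
  rw [← inf_eq_right, h.prod_inf_Δ]
  cases L with
  | nil => exact hΔ.symm
  | cons a L => exact (h.1 a List.mem_cons_self).2.2

theorem le_of_prod_le_Δ_zpow (h : IsWeightedWord L) (hΔ : Δ n ≠ 1) {k : ℤ}
    (hk : L.prod ≤ Δ n ^ k) : L.length ≤ k := by
  by_contra! hlt
  have hprod := hk.trans (monotone_Δ_zpow n (Int.le_sub_one_of_lt hlt))
  by_cases hL : L = []
  · subst hL
    refine hΔ ((one_le_Δ n).antisymm' ?_)
    simpa [mul_Δ_zpow_le_iff] using mul_Δ_zpow_le_mul_Δ_zpow 1 hprod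
  · have hlast := h.prod_mul_getLast_inv hL
    rw [inf_eq_left.2 hprod, mul_eq_left, inv_eq_one] at hlast
    exact (h.1 _ (List.getLast_mem hL)).2.1 hlast

end IsWeightedWord

theorem one_lt_inf_Δ {p : BraidGroup n} (hp : 1 < p) : 1 < p ⊓ Δ n := by
  obtain ⟨i, hi⟩ := exists_mul_σ_le hp
  have hσ := (covBy_mul_σ 1 i).lt
  rw [one_mul] at hi hσ
  exact hσ.trans_le (le_inf hi (σ_le_Δ i))

theorem exponentSum_pos {a : BraidGroup n} (ha : 1 < a) : 0 < exponentSum a := by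
  have h := exponentSum_strictMono ha
  rwa [← mul_inv_cancel (1 : BraidGroup n), exponentSum_mul, exponentSum_inv, add_neg_cancel] at h

theorem isLeftWeighted_inf_Δ {p b : BraidGroup n} (hb : 1 ≤ b) (h : (p ⊓ Δ n) * b ≤ p) :
    IsLeftWeighted (p ⊓ Δ n) b :=
  (isLeftWeighted_iff inf_le_right hb).2 <|
    le_antisymm (inf_le_inf_right _ h) (le_inf (le_mul_of_one_le_right' hb) inf_le_right)

theorem exists_isWeightedWord_prod_eq {p : BraidGroup n} (hp : 1 ≤ p) (hΔ : ¬Δ n ≤ p) :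
    ∃ L, IsWeightedWord L ∧ L.prod = p := by
  obtain ⟨m, hm⟩ : ∃ m : ℕ, exponentSum p < m := ⟨(exponentSum p).toNat + 1, by omega⟩
  induction m generalizing p with
  | zero =>
    have := (one_le_iff_isPositive.1 hp).exponentSum_nonneg
    omega
  | succ m ih =>
    rcases hp.eq_or_lt with rfl | hp
    · exact ⟨[], ⟨by simp, List.isChain_nil⟩, rfl⟩
    have ha := one_lt_inf_Δ hp
    obtain ⟨q, hpq⟩ : ∃ q, p = (p ⊓ Δ n) * q := ⟨_, (mul_inv_cancel_left _ p).symm⟩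
    have hq : 1 ≤ q := le_of_mul_le_mul_left' (by rw [← hpq, mul_one]; exact inf_le_left)
    have hqΔ : ¬Δ n ≤ q := fun h ↦ hΔ <|
      (Δ_le_mul_Δ ha.le).trans ((mul_le_mul_right h _).trans_eq hpq.symm)
    have hsum : exponentSum q < m := by
      have := exponentSum_pos ha
      rw [hpq, exponentSum_mul] at hm
      push_cast at hm
      omega
    obtain ⟨L, hL, rfl⟩ := ih hq hqΔ hsum
    refine ⟨(p ⊓ Δ n) :: L, ⟨List.forall_mem_cons.2 ⟨⟨?_, ha.ne', ?_⟩, hL.1⟩,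
      List.isChain_cons.2 ⟨fun b hb ↦ isLeftWeighted_inf_Δ ?_ ?_, hL.2⟩⟩, ?_⟩
    · exact isPermBraid_iff.2 ⟨ha.le, inf_le_right⟩
    · rwa [Ne, inf_eq_right]
    · exact (isPermBraid_iff.1 (hL.1 b (List.mem_of_mem_head? hb)).1).1
    · have hbL : b ≤ L.prod := by
        have hhead := hL.prod_inf_Δ
        rw [Option.mem_def.1 hb, Option.getD_some] at hhead
        exact hhead ▸ inf_le_left
      exact (mul_le_mul_right hbL _).trans_eq hpq.symm
    · rw [List.prod_cons, ← hpq]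

end WeightedWord

section WeightedForm

theorem Δ_ne_one [Nontrivial (BraidGroup n)] : Δ n ≠ 1 := fun hΔ ↦ by
  obtain ⟨x, hx⟩ := exists_ne (1 : BraidGroup n)
  obtain ⟨k, l, hk, hl⟩ := exists_Δ_zpow_le_and_le x
  rw [hΔ, one_zpow] at hk hl
  exact hx (le_antisymm hl hk)

theorem exists_greatest_Δ_zpow_le [Nontrivial (BraidGroup n)] (x : BraidGroup n) :
    ∃ u : ℤ, Δ n ^ u ≤ x ∧ ∀ k : ℤ, Δ n ^ k ≤ x → k ≤ u := by
  obtain ⟨k, l, hk, hl⟩ := exists_Δ_zpow_le_and_le x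
  have hmono : StrictMono (Δ n ^ · : ℤ → BraidGroup n) := strictMono_int_of_lt_succ fun k ↦ by
    rw [zpow_add_one]
    exact lt_mul_of_one_lt_right' _ ((one_le_Δ n).lt_of_ne' Δ_ne_one)
  exact Int.exists_greatest_of_bdd ⟨l, fun m hm ↦ hmono.le_iff_le.1 (hm.trans hl)⟩ ⟨k, hk⟩

theorem exists_isWeightedForm (x : BraidGroup n) : ∃ u L, IsWeightedForm u L x := by
  rcases subsingleton_or_nontrivial (BraidGroup n)
  · exact ⟨0, [], by simp, List.isChain_nil, Subsingleton.elim _ _⟩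
  obtain ⟨u, hu, hmax⟩ := exists_greatest_Δ_zpow_le x
  obtain ⟨L, hL, hprod⟩ := exists_isWeightedWord_prod_eq (p := (Δ n ^ u)⁻¹ * x)
    (by rwa [le_inv_mul_iff_mul_le, mul_one]) fun hΔ ↦ by
      rw [le_inv_mul_iff_mul_le, ← zpow_add_one] at hΔ
      have := hmax _ hΔ
      omega
  exact ⟨u, L, hL.1, hL.2, by rw [hprod, mul_inv_cancel_left]⟩

theorem isWeightedForm_wf (x : BraidGroup n) : IsWeightedForm (wf x).1 (wf x).2 x :=
  Classical.epsilon_spec (p := fun p ↦ IsWeightedForm p.1 p.2 x) <|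
    (exists_isWeightedForm x).elim fun u ⟨L, h⟩ ↦ ⟨(u, L), h⟩

theorem isWeightedWord_wf (x : BraidGroup n) : IsWeightedWord (wf x).2 :=
  ⟨(isWeightedForm_wf x).1, (isWeightedForm_wf x).2.1⟩

theorem eq_Δ_zpow_mul_prod_wf (x : BraidGroup n) : x = Δ n ^ binf x * (wf x).2.prod :=
  (isWeightedForm_wf x).2.2

theorem nontrivial_of_blen_pos {x : BraidGroup n} (hx : 0 < blen x) :
    Nontrivial (BraidGroup n) := by
  obtain ⟨a, ha⟩ := List.exists_mem_of_length_pos hx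
  exact ⟨a, 1, ((isWeightedForm_wf x).1 a ha).2.1⟩

theorem Δ_zpow_le_iff [Nontrivial (BraidGroup n)] {x : BraidGroup n} {k : ℤ} :
    Δ n ^ k ≤ x ↔ k ≤ binf x := by
  have hw := isWeightedWord_wf x
  have hx : Δ n ^ binf x ≤ x := by
    nth_rw 2 [eq_Δ_zpow_mul_prod_wf x]
    exact le_mul_of_one_le_right' hw.one_le_prod
  refine ⟨fun h ↦ ?_, fun h ↦ (monotone_Δ_zpow n h).trans hx⟩
  by_contra! hlt
  refine hw.not_Δ_le_prod Δ_ne_one (le_of_mul_le_mul_left' (a := Δ n ^ binf x) ?_)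
  rw [← zpow_add_one, ← eq_Δ_zpow_mul_prod_wf]
  exact (monotone_Δ_zpow n (Int.add_one_le_of_lt hlt)).trans h

theorem le_Δ_zpow_iff [Nontrivial (BraidGroup n)] {x : BraidGroup n} {k : ℤ} :
    x ≤ Δ n ^ k ↔ bsup x ≤ k := by
  have hw := isWeightedWord_wf x
  have hx : x ≤ Δ n ^ k ↔ (wf x).2.prod ≤ Δ n ^ (k - binf x) := by
    rw [sub_eq_neg_add, zpow_add, zpow_neg, le_inv_mul_iff_mul_le, ← eq_Δ_zpow_mul_prod_wf]
  have hk : bsup x ≤ k ↔ (wf x).2.length ≤ k - binf x := by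
    rw [bsup, blen]
    omega
  rw [hx, hk]
  exact ⟨hw.le_of_prod_le_Δ_zpow Δ_ne_one,
    fun h ↦ hw.prod_le_Δ_zpow.trans (monotone_Δ_zpow n h)⟩

theorem binf_inv [Nontrivial (BraidGroup n)] (x : BraidGroup n) : binf x⁻¹ = -bsup x :=
  eq_of_forall_le_iff fun k ↦ by
    rw [← Δ_zpow_le_iff, ← neg_neg k, ← inv_le_Δ_zpow_iff, inv_inv, le_Δ_zpow_iff, neg_neg,
      le_neg]

theorem bsup_inv [Nontrivial (BraidGroup n)] (x : BraidGroup n) : bsup x⁻¹ = -binf x := by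
  rw [← neg_neg (bsup x⁻¹), ← binf_inv, inv_inv]

theorem blen_inv [Nontrivial (BraidGroup n)] (x : BraidGroup n) : blen x⁻¹ = blen x := by
  have h := binf_inv x
  have h' := bsup_inv x
  rw [bsup] at h h'
  omega

theorem τpow_bhead (x : BraidGroup n) :
    τpow (binf x) (bhead x) = x * Δ n ^ (-binf x) ⊓ Δ n := by
  have hx : x * Δ n ^ (-binf x) = Δ n ^ binf x * (wf x).2.prod * Δ n ^ (-binf x) := by
    rw [← eq_Δ_zpow_mul_prod_wf]
  have hΔ : Δ n = Δ n ^ binf x * Δ n * Δ n ^ (-binf x) := by group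
  rw [τpow_eq, bhead, ← (isWeightedWord_wf x).prod_inf_Δ, mul_inf_eq, inf_mul_Δ_zpow, ← hΔ, hx]

theorem btail_inv_mul_Δ {x : BraidGroup n} (hx : 0 < blen x) :
    (btail x)⁻¹ * Δ n = x⁻¹ * Δ n ^ bsup x ⊓ Δ n := by
  have hL : (wf x).2 ≠ [] := List.ne_nil_of_length_pos hx
  have htail : btail x = (wf x).2.getLast hL := by
    rw [btail, List.getLast?_eq_getLast_of_ne_nil hL, Option.getD_some]
  have hmul : x * (btail x)⁻¹ = x ⊓ Δ n ^ (bsup x - 1) := by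
    nth_rw 1 [eq_Δ_zpow_mul_prod_wf x]
    rw [mul_assoc, htail, (isWeightedWord_wf x).prod_mul_getLast_inv hL, mul_inf_eq,
      ← eq_Δ_zpow_mul_prod_wf, ← zpow_add, bsup, blen, add_sub_assoc]
  rw [eq_inv_mul_of_mul_eq hmul, mul_inf_eq, inv_mul_cancel]
  have h := inf_mul_Δ_zpow 1 (x⁻¹ * Δ n ^ (bsup x - 1)) 1
  rwa [zpow_one, one_mul, mul_assoc x⁻¹, ← zpow_add_one, sub_add_cancel, inf_comm (Δ n)] at h

theorem one_le_mul_Δ_zpow (x : BraidGroup n) : 1 ≤ x * Δ n ^ (-binf x) := by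
  rw [← mul_Δ_zpow_le_iff, one_mul]
  nth_rw 2 [eq_Δ_zpow_mul_prod_wf x]
  exact le_mul_of_one_le_right' (isWeightedWord_wf x).one_le_prod

theorem one_le_inv_mul_Δ_zpow [Nontrivial (BraidGroup n)] (x : BraidGroup n) :
    1 ≤ x⁻¹ * Δ n ^ bsup x := by
  rw [le_inv_mul_iff_mul_le, mul_one, le_Δ_zpow_iff]

theorem isCW_iff {x : BraidGroup n} (hx : 0 < blen x) :
    IsCW x ↔ x * Δ n ^ (-binf x) ⊓ x⁻¹ * Δ n ^ bsup x = 1 := by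
  have := nontrivial_of_blen_pos hx
  rw [inf_eq_one_iff (one_le_mul_Δ_zpow x) (one_le_inv_mul_Δ_zpow x)]
  simp only [IsCW, IsLeftWeighted, leftDvd_iff_le, τpow_bhead, btail_inv_mul_Δ hx, le_inf_iff,
    σ_le_Δ, and_true]
  exact forall_congr' fun i ↦ by rw [and_comm]

theorem IsCW.inv {x : BraidGroup n} (hx : 0 < blen x) (h : IsCW x) : IsCW x⁻¹ := by
  have := nontrivial_of_blen_pos hx
  rw [isCW_iff (by rwa [blen_inv]), inv_inv, binf_inv, bsup_inv, neg_neg, inf_comm]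
  exact (isCW_iff hx).1 h

end WeightedForm

section Decycling

theorem cyc_eq (x : BraidGroup n) :
    cyc x = (x * Δ n ^ (-binf x) ⊓ Δ n)⁻¹ * x * (x * Δ n ^ (-binf x) ⊓ Δ n) := by
  rw [cyc, τpow_bhead]

theorem τ_Δ : τ n (Δ n) = Δ n := by rw [τ_eq_conj, mul_inv_cancel_right]

theorem τ_inf (a b : BraidGroup n) : τ n (a ⊓ b) = τ n a ⊓ τ n b := by
  simp only [τ_eq_conj, ← zpow_neg_one, mul_inf_eq, inf_mul_Δ_zpow]

variable [Nontrivial (BraidGroup n)]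

theorem binf_τ (x : BraidGroup n) : binf (τ n x) = binf x :=
  eq_of_forall_le_iff fun k ↦ by
    rw [← Δ_zpow_le_iff, ← Δ_zpow_le_iff, τ_eq_conj, ← zpow_neg_one, ← mul_Δ_zpow_le_iff,
      zpow_one, ← zpow_add_one, add_comm, zpow_one_add, mul_le_mul_iff_left]

theorem cyc_τ (x : BraidGroup n) : cyc (τ n x) = τ n (cyc x) := by
  rw [cyc_eq, cyc_eq, binf_τ, map_mul, map_mul, map_inv, τ_inf, map_mul, map_zpow, τ_Δ]

theorem decyc_inv (x : BraidGroup n) : (decyc x)⁻¹ = τ n (cyc x⁻¹) := by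
  rcases Nat.eq_zero_or_pos (blen x) with hx | hx
  · have hnil := List.eq_nil_of_length_eq_zero hx
    have hnil' := List.eq_nil_of_length_eq_zero ((blen_inv x).trans hx)
    have htail : btail x = 1 := by rw [btail, hnil, List.getLast?_nil, Option.getD_none]
    have hhead : bhead x⁻¹ = 1 := by rw [bhead, hnil', List.head?_nil, Option.getD_none]
    have hτ : τ n x = x := by
      rw [eq_Δ_zpow_mul_prod_wf x, hnil, List.prod_nil, mul_one, map_zpow, τ_Δ]
    rw [decyc, cyc, htail, hhead, τpow_eq, mul_one, ← zpow_add, add_neg_cancel, zpow_zero]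
    simp only [one_mul, inv_one, mul_one, map_inv, hτ]
  · rw [cyc_eq, binf_inv, neg_neg, ← btail_inv_mul_Δ hx, decyc, τ_eq_conj]
    group

theorem cyc_iterate_inv {x : BraidGroup n} {N : ℕ} (h : decyc^[N] x = x) :
    cyc^[2 * N] x⁻¹ = x⁻¹ := by
  have hsemiconj : Function.Semiconj (·⁻¹) decyc (τ n ∘ cyc) := decyc_inv
  have hcomm : Function.Commute (τ n) cyc := fun x ↦ (cyc_τ x).symm
  have hinvol : Function.Involutive (τ n) := τ_τ
  have hN : (τ n ∘ cyc)^[N] x⁻¹ = x⁻¹ := by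
    rw [← (hsemiconj.iterate_right N).eq, h]
  have h2N : (τ n ∘ cyc)^[2 * N] x⁻¹ = x⁻¹ := by
    rw [two_mul, Function.iterate_add_apply, hN, hN]
  rwa [hcomm.comp_iterate, hinvol.iterate_two_mul, Function.id_comp] at h2N

end Decycling

section CyclingStep

theorem exponentSum_shift (y a : BraidGroup n) (k : ℤ) :
    exponentSum (shift y k a) = exponentSum a + exponentSum (y * Δ n ^ k) := by
  simp only [shift_apply, exponentSum_mul]
  ring

theorem shift_one_one (a : BraidGroup n) : shift 1 1 a = a * Δ n := by
  rw [shift_apply, one_mul, zpow_one]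

theorem le_shift_one_one (a : BraidGroup n) : a ≤ shift 1 1 a := by
  rw [shift_one_one]
  exact le_mul_of_one_le_right' (one_le_Δ n)

theorem shift_one_one_iterate (l : ℕ) (a : BraidGroup n) :
    (shift 1 1)^[l] a = a * Δ n ^ (l : ℤ) := by
  induction l with
  | zero => rw [Function.iterate_zero_apply, Nat.cast_zero, zpow_zero, mul_one]
  | succ l ih =>
    rw [Function.iterate_succ_apply', ih, shift_one_one, mul_assoc, Nat.cast_succ, zpow_add_one]

theorem shift_le_shift_iff {y a b : BraidGroup n} {k : ℤ} :
    shift y k a ≤ shift y k b ↔ a ≤ b := by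
  rw [shift_apply, shift_apply, mul_Δ_zpow_le_iff, zpow_neg, mul_inv_cancel_right,
    mul_le_mul_iff_left]

theorem semiconj_shift {g x y : BraidGroup n} (h : SemiconjBy g x y) (k l : ℤ) :
    Function.Semiconj (shift g k) (shift x l) (shift y l) := fun a ↦ by
  simp only [shift_apply, ← mul_assoc, ← h.eq]
  simp only [mul_assoc, ← zpow_add, add_comm]

theorem commute_shift_one_one (y : BraidGroup n) (k : ℤ) :
    Function.Commute (shift y k) (shift 1 1) :=
  semiconj_shift (Commute.one_right y) k 1

/-- The conjugator of `BraidGroup.cyc`, transported to the conjugates of `y`: if `a⁻¹ * y * a` has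
the infimum of `y`, then cycling it yields the conjugate of `y` by `cyclingStep y a`. -/
noncomputable def cyclingStep (y : BraidGroup n) : BraidGroup n → BraidGroup n :=
  ⇑(shift y (-binf y)) ⊓ ⇑(shift 1 1)

theorem cyclingStep_apply (y a : BraidGroup n) :
    cyclingStep y a = y * a * Δ n ^ (-binf y) ⊓ a * Δ n := by
  rw [cyclingStep, Pi.inf_apply, shift_apply, shift_one_one]

theorem semiconj_cyclingStep {g x y : BraidGroup n} (h : SemiconjBy g x y)
    (hxy : binf x = binf y) (k : ℤ) :
    Function.Semiconj (shift g k) (cyclingStep x) (cyclingStep y) := fun a ↦ by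
  rw [cyclingStep, cyclingStep, Pi.inf_apply, Pi.inf_apply, map_inf, hxy,
    (semiconj_shift h k _).eq, (commute_shift_one_one g k).eq]

theorem cyc_conj {a y : BraidGroup n} (h : binf (a⁻¹ * y * a) = binf y) :
    cyc (a⁻¹ * y * a) = (cyclingStep y a)⁻¹ * y * cyclingStep y a := by
  have hstep : a⁻¹ * y * a * Δ n ^ (-binf y) ⊓ Δ n = a⁻¹ * cyclingStep y a := by
    rw [cyclingStep_apply, mul_inf_eq, inv_mul_cancel_left]
    simp only [mul_assoc]
  rw [cyc_eq, h, hstep]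
  group

variable [Nontrivial (BraidGroup n)]

theorem binf_le_binf_cyc (x : BraidGroup n) : binf x ≤ binf (cyc x) := by
  rw [← Δ_zpow_le_iff, cyc_eq]
  set a := x * Δ n ^ (-binf x) ⊓ Δ n
  have ha1 : 1 ≤ a := le_inf (one_le_mul_Δ_zpow x) (one_le_Δ n)
  rw [mul_assoc, le_inv_mul_iff_mul_le, mul_Δ_zpow_le_iff]
  calc a ≤ x * Δ n ^ (-binf x) := inf_le_left
    _ ≤ x * a * Δ n ^ (-binf x) := mul_Δ_zpow_le_mul_Δ_zpow _ (le_mul_of_one_le_right' ha1)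

theorem binf_cyc_iterate {y : BraidGroup n} {M : ℕ} (hM : 0 < M) (hy : cyc^[M] y = y) (j : ℕ) :
    binf (cyc^[j] y) = binf y := by
  have hmono : Monotone fun j ↦ binf (cyc^[j] y) := monotone_nat_of_le_succ fun j ↦ by
    rw [Function.iterate_succ_apply']
    exact binf_le_binf_cyc _
  have hper : cyc^[M * j] y = y := Function.IsPeriodicPt.mul_const hy j
  refine le_antisymm ?_ (hmono (Nat.zero_le j))
  simpa only [hper] using hmono (Nat.le_mul_of_pos_left j hM)

theorem cyc_iterate_eq_conj {y : BraidGroup n} {M : ℕ} (hM : 0 < M) (hy : cyc^[M] y = y)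
    (j : ℕ) : cyc^[j] y = ((cyclingStep y)^[j] 1)⁻¹ * y * (cyclingStep y)^[j] 1 := by
  induction j with
  | zero => simp
  | succ j ih =>
    have hbinf := binf_cyc_iterate hM hy j
    rw [ih] at hbinf
    rw [Function.iterate_succ_apply', Function.iterate_succ_apply', ih, cyc_conj hbinf]

end CyclingStep

section Recurrence

/-- The orbit of `1` under `cyclingStep y` returns to `1` up to left multiplication by the
centralizer of `y` and right multiplication by powers of `Δ`; both commute with `cyclingStep y`. -/
def IsRecurrent (y : BraidGroup n) : Prop :=
  ∃ M > 0, ∃ z, ∃ k : ℤ, Commute z y ∧ (cyclingStep y)^[M] 1 = z * Δ n ^ k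

theorem isRecurrent_of_cyc_iterate_eq [Nontrivial (BraidGroup n)] {y : BraidGroup n} {M : ℕ}
    (hM : 0 < M) (hy : cyc^[M] y = y) : IsRecurrent y := by
  refine ⟨M, hM, (cyclingStep y)^[M] 1, 0, ?_, by rw [zpow_zero, mul_one]⟩
  have h := cyc_iterate_eq_conj hM hy M
  rw [hy, mul_assoc, eq_inv_mul_iff_mul_eq] at h
  exact h

theorem IsRecurrent.binf_le [Nontrivial (BraidGroup n)] {x y : BraidGroup n} (hy : IsRecurrent y)
    (h : IsConj x y) : binf x ≤ binf y := by
  obtain ⟨M, hM, z, k, hz, hiter⟩ := hy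
  obtain ⟨⟨g, _, _, _⟩, hg : SemiconjBy g x y⟩ := h
  obtain ⟨-, l, -, hl⟩ := exists_Δ_zpow_le_and_le g
  have Δ_le_shift_iff (w : BraidGroup n) :
      shift 1 1 1 ≤ shift w (-binf y) 1 ↔ binf y < binf w := by
    rw [shift_one_one, one_mul, shift_apply, mul_one, ← mul_Δ_zpow_le_iff, ← zpow_one_add,
      Δ_zpow_le_iff, add_comm, Int.add_one_le_iff]
  by_contra! hlt
  have hb : shift g (-l) 1 ≤ 1 := by
    rw [shift_apply, mul_one, mul_Δ_zpow_le_iff, one_mul, neg_neg]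
    exact hl
  have hDX : shift 1 1 (shift g (-l) 1) ≤ shift y (-binf y) (shift g (-l) 1) := by
    rw [← (commute_shift_one_one _ _).eq, ← (semiconj_shift hg _ _).eq, shift_le_shift_iff]
    exact (Δ_le_shift_iff x).2 hlt
  refine ((Δ_le_shift_iff y).1 ?_).false
  exact le_of_iterate_inf_eq (R := shift z k) exponentSum_strictMono (commute_shift_one_one _ _)
    (semiconj_shift hz.symm _ _) (commute_shift_one_one _ _).symm
    (fun a ↦ exponentSum_shift _ a _) (fun a ↦ exponentSum_shift _ a _) hM
    (hiter.trans (by rw [shift_apply, mul_one])) hb hDX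

theorem shift_le_iterate [Nontrivial (BraidGroup n)] (x : BraidGroup n) :
    shift x (-binf x) 1 ≤ (shift 1 1)^[blen x] 1 := by
  rw [shift_apply, mul_one, shift_one_one_iterate, mul_Δ_zpow_le_iff, neg_neg, one_mul,
    ← zpow_add, le_Δ_zpow_iff, bsup, add_comm]

theorem one_le_shift (x : BraidGroup n) : 1 ≤ shift x (-binf x) 1 := by
  rw [shift_apply, mul_one]
  exact one_le_mul_Δ_zpow x

theorem shift_inv_mul_Δ_zpow_bsup (x : BraidGroup n) :
    shift x (-binf x) (x⁻¹ * Δ n ^ bsup x) = (shift 1 1)^[blen x] 1 := by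
  rw [shift_apply, shift_one_one_iterate, mul_inv_cancel_left, ← zpow_add, bsup, one_mul]
  congr 1
  ring

theorem IsCW.iterate_cyclingStep {x : BraidGroup n} (h : IsCW x) (hx : 0 < blen x) :
    (cyclingStep x)^[blen x] 1 = shift x (-binf x) 1 := by
  have := nontrivial_of_blen_pos hx
  refine iterate_inf_eq_of_inf_le (commute_shift_one_one _ _) le_shift_one_one hx
    (one_le_shift x) (shift_le_iterate x) ?_
  rw [← shift_inv_mul_Δ_zpow_bsup, ← map_inf, shift_apply x 1, mul_one, (isCW_iff hx).1 h,
    shift_apply, mul_one]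

theorem isCW_of_iterate_cyclingStep {x : BraidGroup n} (hx : 2 ≤ blen x)
    (h : (cyclingStep x)^[blen x] 1 = shift x (-binf x) 1) : IsCW x := by
  have := nontrivial_of_blen_pos (two_pos.trans_le hx)
  have hinf := inf_le_of_iterate_inf_eq (commute_shift_one_one _ _) le_shift_one_one
    (one_le_shift x) hx h
  rw [← shift_inv_mul_Δ_zpow_bsup, ← (commute_shift_one_one _ _).eq, ← map_inf, ← map_inf,
    shift_le_shift_iff, inf_right_comm, shift_apply x 1, mul_one, shift_one_one, one_mul] at hinf
  rw [isCW_iff (two_pos.trans_le hx)]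
  refine ((le_inf (one_le_mul_Δ_zpow x) (one_le_inv_mul_Δ_zpow x)).eq_of_not_lt fun hlt ↦ ?_).symm
  exact (one_lt_inf_Δ hlt).not_ge hinf

theorem IsCW.isRecurrent {x : BraidGroup n} (h : IsCW x) (hx : 0 < blen x) : IsRecurrent x :=
  ⟨blen x, hx, x, -binf x, Commute.refl x, by
    rw [h.iterate_cyclingStep hx, shift_apply, mul_one]⟩

theorem IsRecurrent.isCW_of_isConj {x y : BraidGroup n} (hy : IsRecurrent y) (h : IsConj x y)
    (hbinf : binf x = binf y) (hblen : blen x = blen y) (hx : IsCW x) (hl : 2 ≤ blen x) :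
    IsCW y := by
  have hpos : 0 < blen x := two_pos.trans_le hl
  have := nontrivial_of_blen_pos hpos
  obtain ⟨M, hM, z, k, hz, hiter⟩ := hy
  obtain ⟨⟨g, _, _, _⟩, hg : SemiconjBy g x y⟩ := h
  obtain ⟨l, -, hl', -⟩ := exists_Δ_zpow_le_and_le g
  have hb : 1 ≤ shift g (-l) 1 := by
    rw [shift_apply, mul_one, ← mul_Δ_zpow_le_iff, one_mul]
    exact hl'
  have hFb : (cyclingStep y)^[blen y] (shift g (-l) 1) =
      shift y (-binf y) (shift g (-l) 1) := by
    rw [← ((semiconj_cyclingStep hg hbinf _).iterate_right _).eq, ← hblen,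
      hx.iterate_cyclingStep hpos, (semiconj_shift hg _ _).eq, hbinf]
  refine isCW_of_iterate_cyclingStep (hblen ▸ hl) ?_
  exact iterate_inf_eq_of_le (R := shift z k) exponentSum_strictMono (commute_shift_one_one _ _)
    (semiconj_shift hz.symm _ _) (commute_shift_one_one _ _).symm le_shift_one_one
    (fun a ↦ exponentSum_shift _ a _) (fun a ↦ exponentSum_shift _ a _) hM
    (hiter.trans (by rw [shift_apply, mul_one])) (one_le_shift y) (shift_le_iterate y) hb hFb

end Recurrence

/-- if `x` is cyclically weighted with canonical length `ℓ(x) ≥ 2`,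
then every braid in `RSSS(x)` is cyclically weighted. -/
theorem rsss_all_cw (n : ℕ) (x : BraidGroup n) (hcw : IsCW x) (hl : 2 ≤ blen x) :
    ∀ y ∈ RSSS x, IsCW y := by
  rintro y ⟨hxy, ⟨M, hM, hcyc⟩, N, hN, hdecyc⟩
  have hpos : 0 < blen x := two_pos.trans_le hl
  have := nontrivial_of_blen_pos hpos
  have hxy' : IsConj x⁻¹ y⁻¹ := hxy.imp fun _ h ↦ h.inv_right
  have hx : IsRecurrent x := hcw.isRecurrent hpos
  have hx' : IsRecurrent x⁻¹ := (hcw.inv hpos).isRecurrent (by rwa [blen_inv])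
  have hy : IsRecurrent y := isRecurrent_of_cyc_iterate_eq hM hcyc
  have hy' : IsRecurrent y⁻¹ :=
    isRecurrent_of_cyc_iterate_eq (Nat.mul_pos two_pos hN) (cyc_iterate_inv hdecyc)
  have hbinf : binf x = binf y := (hy.binf_le hxy).antisymm (hx.binf_le hxy.symm)
  have hbinf' : binf x⁻¹ = binf y⁻¹ := (hy'.binf_le hxy').antisymm (hx'.binf_le hxy'.symm)
  have hblen : blen x = blen y := by
    rw [binf_inv, binf_inv, bsup, bsup] at hbinf'
    omega
  exact hy.isCW_of_isConj hxy hbinf hblen hcw hl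

end BraidGroup
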